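/- arXiv:2511.20064 — 5 statements merged into one kernel-verified Lean document; each statement's English description precedes it below -/
import Mathlib

section
/- Let ν ≥ 1 be an integer, and let u : ℝ → ℝ^ν and u' : ℝ → ℝ^ν be such that u has derivative u'(τ) at every τ ∈ [0,1] and u' is integrable on [0,1]. Then for every η > 0, every ρ with 0 < ρ ≤ 1, and every t ∈ (0,1), one has ‖u(t)‖ ≤ 2η + ∫₀¹ (‖u'(τ)‖ − η/ρ)_+ dτ + (1/ρ) ∫₀¹ (‖u(τ)‖ − η)_+ dτ. -/
open MeasureTheory Filter Topology

/-!
Choose a subinterval `J` of length `ρ` containing `t`. On `J` some value `‖u s‖` is at most the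
average of `‖u‖`, and `‖u t - u s‖` is at most the integral of `‖u'‖`. In these two terms,
replacing `‖u‖` by its excess over `η` and `‖u'‖` by its excess over `η / ρ` costs at most `η`
each, after which the excesses, being nonnegative, may be integrated over the whole interval.
-/

section Truncation

variable {X : Type*} [MeasurableSpace X] {μ : Measure X} {s : Set X} {f : X → ℝ}

lemma integrableOn_max_sub_const (hf : IntegrableOn f s μ) (hs : μ s ≠ ⊤) (c : ℝ) :
    IntegrableOn (fun x => max (f x - c) 0) s μ :=
  (hf.sub (integrableOn_const hs)).pos_part

lemma setIntegral_le_setIntegral_max_sub_const_add (hf : IntegrableOn f s μ) (hs : μ s ≠ ⊤)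
    (c : ℝ) : ∫ x in s, f x ∂μ ≤ (∫ x in s, max (f x - c) 0 ∂μ) + μ.real s * c := by
  have hconst : IntegrableOn (fun _ => c) s μ := integrableOn_const hs
  have hexcess := integrableOn_max_sub_const hf hs c
  calc ∫ x in s, f x ∂μ
      ≤ ∫ x in s, (max (f x - c) 0 + c) ∂μ :=
        integral_mono hf (hexcess.add hconst) fun x => sub_le_iff_le_add.mp (le_max_left _ _)
    _ = (∫ x in s, max (f x - c) 0 ∂μ) + μ.real s * c := by
        rw [integral_add hexcess hconst, setIntegral_const, smul_eq_mul]

lemma setIntegral_max_sub_const_mono_set {t : Set X} (hf : IntegrableOn f t μ) (ht : μ t ≠ ⊤)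
    (hst : s ⊆ t) (c : ℝ) :
    ∫ x in s, max (f x - c) 0 ∂μ ≤ ∫ x in t, max (f x - c) 0 ∂μ :=
  setIntegral_mono_set (integrableOn_max_sub_const hf ht c)
    (.of_forall fun _ => le_max_right _ _) hst.eventuallyLE

end Truncation

lemma exists_mem_Icc_add_subset_Icc {G : Type*} [AddCommGroup G] [LinearOrder G]
    [IsOrderedAddMonoid G] {a b ρ t : G} (hρ : 0 ≤ ρ) (hρab : ρ ≤ b - a) (ht : t ∈ Set.Icc a b) :
    ∃ c, t ∈ Set.Icc c (c + ρ) ∧ Set.Icc c (c + ρ) ⊆ Set.Icc a b := by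
  have hab : a ≤ b - ρ := le_sub_comm.mp hρab
  refine ⟨min t (b - ρ), ⟨min_le_left _ _, ?_⟩, Set.Icc_subset_Icc (le_min ht.1 hab) ?_⟩
  · rw [← sub_le_iff_le_add]
    exact le_min (sub_le_self t hρ) (sub_le_sub_right ht.2 ρ)
  · rw [← le_sub_iff_add_le]
    exact min_le_right _ _

section Sobolev

variable {E : Type*} [NormedAddCommGroup E] [NormedSpace ℝ E] {u u' : ℝ → E} {a b s t : ℝ}

lemma norm_sub_le_setIntegral_norm_deriv (hcont : ContinuousOn u (Set.Icc a b))
    (hderiv : ∀ τ ∈ Set.Ioo a b, HasDerivAt u (u' τ) τ) (hint : IntegrableOn u' (Set.Icc a b))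
    (hs : s ∈ Set.Icc a b) (ht : t ∈ Set.Icc a b) :
    ‖u t - u s‖ ≤ ∫ τ in Set.Icc a b, ‖u' τ‖ := by
  wlog hst : s ≤ t generalizing s t
  · rw [norm_sub_rev]
    exact this ht hs (le_of_not_ge hst)
  have hIcc : Set.Icc s t ⊆ Set.Icc a b := Set.Icc_subset_Icc hs.1 ht.2
  have hIoo : Set.Ioo s t ⊆ Set.Ioo a b := Set.Ioo_subset_Ioo hs.1 ht.2
  calc ‖u t - u s‖
      ≤ ∫ τ in s..t, ‖u' τ‖ :=
        norm_sub_le_integral_of_norm_deriv_le_of_le hst (hcont.mono hIcc)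
          (fun τ hτ => (hderiv τ (hIoo hτ)).differentiableAt.differentiableWithinAt)
          (.of_forall fun τ hτ => by rw [(hderiv τ (hIoo hτ)).deriv])
          ((intervalIntegrable_iff_integrableOn_Icc_of_le hst).mpr (hint.mono_set hIcc).norm)
    _ = ∫ τ in Set.Icc s t, ‖u' τ‖ := by
        rw [intervalIntegral.integral_of_le hst, integral_Icc_eq_integral_Ioc]
    _ ≤ ∫ τ in Set.Icc a b, ‖u' τ‖ :=
        setIntegral_mono_set hint.norm (.of_forall fun _ => norm_nonneg _) hIcc.eventuallyLE

lemma norm_le_setAverage_norm_add_setIntegral_norm_deriv (hab : a < b)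
    (hcont : ContinuousOn u (Set.Icc a b)) (hderiv : ∀ τ ∈ Set.Ioo a b, HasDerivAt u (u' τ) τ)
    (hint : IntegrableOn u' (Set.Icc a b)) (ht : t ∈ Set.Icc a b) :
    ‖u t‖ ≤ (⨍ τ in Set.Icc a b, ‖u τ‖) + ∫ τ in Set.Icc a b, ‖u' τ‖ := by
  have hvol : volume (Set.Icc a b) ≠ 0 := by simpa using hab
  obtain ⟨s, hs, hus⟩ :=
    exists_le_setAverage hvol measure_Icc_lt_top.ne hcont.norm.integrableOn_Icc
  calc ‖u t‖
      ≤ ‖u s‖ + ‖u t - u s‖ := norm_le_norm_add_norm_sub' (u t) (u s)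
    _ ≤ (⨍ τ in Set.Icc a b, ‖u τ‖) + ∫ τ in Set.Icc a b, ‖u' τ‖ :=
        add_le_add hus (norm_sub_le_setIntegral_norm_deriv hcont hderiv hint hs ht)

lemma norm_le_add_setIntegral_max_norm_sub (hab : a < b)
    (hcont : ContinuousOn u (Set.Icc a b)) (hderiv : ∀ τ ∈ Set.Ioo a b, HasDerivAt u (u' τ) τ)
    (hint : IntegrableOn u' (Set.Icc a b)) (ht : t ∈ Set.Icc a b) (α β : ℝ) :
    ‖u t‖ ≤ α + (b - a) * β + (∫ τ in Set.Icc a b, max (‖u' τ‖ - β) 0)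
      + (1 / (b - a)) * ∫ τ in Set.Icc a b, max (‖u τ‖ - α) 0 := by
  have hlen : 0 < b - a := sub_pos.mpr hab
  have hvol : volume.real (Set.Icc a b) = b - a := Real.volume_real_Icc_of_le hab.le
  have haverage : ⨍ τ in Set.Icc a b, ‖u τ‖
      ≤ α + (1 / (b - a)) * ∫ τ in Set.Icc a b, max (‖u τ‖ - α) 0 := by
    have hle := setIntegral_le_setIntegral_max_sub_const_add (μ := volume)
      hcont.norm.integrableOn_Icc measure_Icc_lt_top.ne α
    rw [hvol] at hle
    calc ⨍ τ in Set.Icc a b, ‖u τ‖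
        = (b - a)⁻¹ * ∫ τ in Set.Icc a b, ‖u τ‖ := by rw [setAverage_eq, hvol, smul_eq_mul]
      _ ≤ (b - a)⁻¹ * ((∫ τ in Set.Icc a b, max (‖u τ‖ - α) 0) + (b - a) * α) := by gcongr
      _ = α + (1 / (b - a)) * ∫ τ in Set.Icc a b, max (‖u τ‖ - α) 0 := by field_simp; ring
  have hvariation :=
    setIntegral_le_setIntegral_max_sub_const_add hint.norm measure_Icc_lt_top.ne β
  rw [hvol] at hvariation
  linarith [norm_le_setAverage_norm_add_setIntegral_norm_deriv hab hcont hderiv hint ht]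

theorem truncated_sobolev_1d_general (hcont : ContinuousOn u (Set.Icc a b))
    (hderiv : ∀ τ ∈ Set.Ioo a b, HasDerivAt u (u' τ) τ) (hint : IntegrableOn u' (Set.Icc a b))
    {ρ : ℝ} (hρ : 0 < ρ) (hρab : ρ ≤ b - a) (ht : t ∈ Set.Icc a b) (α β : ℝ) :
    ‖u t‖ ≤ α + ρ * β + (∫ τ in Set.Icc a b, max (‖u' τ‖ - β) 0)
      + (1 / ρ) * ∫ τ in Set.Icc a b, max (‖u τ‖ - α) 0 := by
  obtain ⟨c, htc, hsub⟩ := exists_mem_Icc_add_subset_Icc hρ.le hρab ht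
  have hsub_Ioo : Set.Ioo c (c + ρ) ⊆ Set.Ioo a b := by
    simpa only [interior_Icc] using interior_mono hsub
  have hlocal := norm_le_add_setIntegral_max_norm_sub (lt_add_of_pos_right c hρ)
    (hcont.mono hsub) (fun τ hτ => hderiv τ (hsub_Ioo hτ)) (hint.mono_set hsub) htc α β
  rw [add_sub_cancel_left] at hlocal
  refine hlocal.trans ?_
  gcongr α + ρ * β + ?_ + 1 / ρ * ?_
  · exact setIntegral_max_sub_const_mono_set hint.norm measure_Icc_lt_top.ne hsub β
  · exact setIntegral_max_sub_const_mono_set hcont.norm.integrableOn_Icc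
      measure_Icc_lt_top.ne hsub α

end Sobolev

/-- Truncated one-dimensional Sobolev embedding (Lemma 2.10). -/
theorem truncated_sobolev_1d (ν : ℕ) (hν : 1 ≤ ν)
    (u u' : ℝ → EuclideanSpace ℝ (Fin ν))
    (hderiv : ∀ τ ∈ Set.Icc (0:ℝ) 1, HasDerivAt u (u' τ) τ)
    (hint : IntegrableOn u' (Set.Icc (0:ℝ) 1))
    (η : ℝ) (hη : 0 < η) (ρ : ℝ) (hρ : 0 < ρ) (hρ1 : ρ ≤ 1)
    (t : ℝ) (ht : t ∈ Set.Ioo (0:ℝ) 1) :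
    ‖u t‖ ≤ 2 * η + (∫ τ in Set.Icc (0:ℝ) 1, max (‖u' τ‖ - η / ρ) 0)
      + (1 / ρ) * ∫ τ in Set.Icc (0:ℝ) 1, max (‖u τ‖ - η) 0 := by
  simpa only [mul_div_cancel₀ η hρ.ne', ← two_mul] using
    truncated_sobolev_1d_general (HasDerivAt.continuousOn hderiv)
      (fun τ hτ => hderiv τ (Set.Ioo_subset_Icc_self hτ)) hint hρ (by rwa [sub_zero])
      (Set.Ioo_subset_Icc_self ht) η (η / ρ)
end

section
/- For every integer k ≥ 1 there exists a constant C > 0 such that the following holds for every integer ν ≥ 1: if Ω ⊆ ℝ^k is open, u : Ω → ℝ^ν is k-times continuously differentiable, η > 0, ρ > 0, and x ∈ Ω is such that the open ball B_ρ(x) is contained in Ω, then ‖u(x)‖ ≤ C ( η + ∫_Ω (‖D^k u(y)‖ − η/ρ^k)_+ dy + ρ^{−k} ∫_Ω (‖u(y)‖ − η)_+ dy ). -/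
open MeasureTheory Filter Topology ENNReal

/-!
On the ray `t ↦ u (x + t • h)`, the `k`-th forward difference at `0` with step `1` expresses `u x`
through the values `u (x + j • h)`, `1 ≤ j ≤ k`, and annihilates the Taylor polynomial of degree
`k - 1`. Expanding at `t = 1` rather than at `t = 0` makes the remainder at every node
`j = 0, …, k` controlled by the kernel `t ^ (k - 1) * ‖h‖ ^ k`: the nodes `j ≥ 1` only see `t ≥ 1`,
and for `j = 0` the kernel `(0 - t) ^ (k - 1)` is already of this form. Averaging over `h` in a ball
of radius `ρ / k` and substituting `z = t • h`, the kernel becomes `‖z‖ ^ (k - d)` up to powers of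
`ρ`, which is bounded because the dimension `d` is at most `k`. This bounds `‖u x‖` by the averages
of `‖u‖` and `ρ ^ k * ‖D^k u‖` over the ball, and truncating these at the levels `η` and `η / ρ ^ k`
costs a multiple of `η`.
-/

section ForwardDifference

open Finset

variable {M G : Type*} [AddCommMonoid M] [NormedAddCommGroup G]

theorem enorm_neg_one_pow_mul_choose_zsmul_le (m n j : ℕ) (g : G) :
    ‖((-1 : ℤ) ^ m * n.choose j) • g‖ₑ ≤ n.choose j * ‖g‖ₑ := by
  have drop_sign : ‖((-1 : ℤ) ^ m * n.choose j) • g‖ₑ = ‖n.choose j • g‖ₑ := by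
    rcases neg_one_pow_eq_or ℤ m with hm | hm <;> simp [hm]
  rw [drop_sign, enorm_eq_nnnorm, enorm_eq_nnnorm]
  exact_mod_cast nnnorm_nsmul_le (a := g) (n := n.choose j)

theorem enorm_fwdDiff_iter_le (h : M) (f : M → G) (n : ℕ) (y : M) :
    ‖(fwdDiff h)^[n] f y‖ₑ ≤ ∑ j ∈ range (n + 1), n.choose j * ‖f (y + j • h)‖ₑ := by
  rw [fwdDiff_iter_eq_sum_shift]
  exact enorm_sum_le_of_le _ fun j _ ↦ enorm_neg_one_pow_mul_choose_zsmul_le _ _ _ _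

theorem enorm_le_sum_add_enorm_fwdDiff_iter (h : M) (f : M → G) (n : ℕ) (y : M) :
    ‖f y‖ₑ ≤ ∑ j ∈ range n, n.choose (j + 1) * ‖f (y + (j + 1) • h)‖ₑ +
      ‖(fwdDiff h)^[n] f y‖ₑ := by
  have enorm_first_term : ‖f y‖ₑ = ‖((-1 : ℤ) ^ n) • f y‖ₑ := by
    rcases neg_one_pow_eq_or ℤ n with hn | hn <;> simp [hn]
  have isolate_first_term : ((-1 : ℤ) ^ n) • f y = (fwdDiff h)^[n] f y -
      ∑ j ∈ range n, ((-1 : ℤ) ^ (n - (j + 1)) * n.choose (j + 1)) • f (y + (j + 1) • h) := by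
    rw [fwdDiff_iter_eq_sum_shift, sum_range_succ']
    simp
  rw [enorm_first_term, isolate_first_term, add_comm]
  refine enorm_sub_le.trans (add_le_add_right (enorm_sum_le_of_le _ fun j _ ↦ ?_) _)
  exact enorm_neg_one_pow_mul_choose_zsmul_le _ _ _ _

theorem fwdDiff_iter_sum_sub_pow_smul_eq_zero {R A : Type*} [CommRing R] [AddCommGroup A]
    [Module R A] (a : R) (c : ℕ → A) (n : ℕ) :
    (fwdDiff 1)^[n] (fun r : R ↦ ∑ i ∈ range n, (r - a) ^ i • c i) = 0 := by
  have translated_monomial (i : ℕ) (hi : i < n) (y : R) :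
      (fwdDiff 1)^[n] (fun r : R ↦ (r - a) ^ i) y = 0 := by
    simp only [sub_eq_add_neg]
    rw [fwdDiff_iter_comp_add 1 (fun r : R ↦ r ^ i), fwdDiff_iter_pow_eq_zero_of_lt hi,
      Pi.zero_apply]
  have monomial_smul (i : ℕ) (hi : i < n) :
      (fwdDiff 1)^[n] (fun r : R ↦ (r - a) ^ i • c i) = 0 := by
    ext y
    have := congrArg (· • c i) (translated_monomial i hi y)
    simpa only [fwdDiff_iter_eq_sum_shift, sum_smul, smul_assoc, zero_smul,
      Pi.zero_apply] using this
  have sum_as_function : (fun r : R ↦ ∑ i ∈ range n, (r - a) ^ i • c i) =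
      ∑ i ∈ range n, fun r : R ↦ (r - a) ^ i • c i := by
    ext r
    simp
  rw [sum_as_function, fwdDiff_iter_finsetSum]
  exact sum_eq_zero fun i hi ↦ monomial_smul i (mem_range.1 hi)

theorem sum_range_choose_succ_le (n : ℕ) : ∑ j ∈ range n, n.choose (j + 1) ≤ 2 ^ n := by
  rw [← Nat.sum_range_choose, sum_range_succ']
  exact Nat.le_add_right _ _

end ForwardDifference

section TaylorAlongLine

open Set Nat

variable {E F : Type*} [NormedAddCommGroup E] [NormedSpace ℝ E] [NormedAddCommGroup F]
  [NormedSpace ℝ F] {u : E → F} {x h : E} {n : ℕ}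

theorem abs_natCast_sub_le_mul_of_mem_uIoc {j m : ℕ} (hjm : j ≤ m) (hm : 1 ≤ m) {t : ℝ}
    (ht : t ∈ uIoc 1 (j : ℝ)) : |j - t| ≤ m * |t| := by
  have hm' : (1 : ℝ) ≤ m := mod_cast hm
  have hjm' : (j : ℝ) ≤ m := mod_cast hjm
  rcases Nat.eq_zero_or_pos j with rfl | hj
  · simpa using le_mul_of_one_le_left (abs_nonneg t) hm'
  · obtain ⟨one_lt, le_j⟩ := uIoc_of_le (α := ℝ) (mod_cast hj : (1 : ℝ) ≤ j) ▸ ht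
    rw [abs_of_nonneg (by linarith), abs_of_pos (by linarith)]
    nlinarith

theorem enorm_sub_pow_smul_iteratedFDeriv_le {j : ℕ} (hj : j ≤ n + 1) {t : ℝ}
    (ht : t ∈ uIoc 1 (j : ℝ)) :
    ‖((j : ℝ) - t) ^ n • iteratedFDeriv ℝ (n + 1) u (x + t • h) fun _ ↦ h‖ₑ ≤
      (n + 1) ^ n *
        (‖t‖ₑ ^ n * ‖h‖ₑ ^ (n + 1) * ‖iteratedFDeriv ℝ (n + 1) u (x + t • h)‖ₑ) := by
  have kernel_le : ‖(j : ℝ) - t‖ₑ ≤ (n + 1) * ‖t‖ₑ := by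
    have := ENNReal.ofReal_le_ofReal (abs_natCast_sub_le_mul_of_mem_uIoc hj (by lia) ht)
    rw [ENNReal.ofReal_mul (by positivity), ENNReal.ofReal_natCast] at this
    simpa [Real.enorm_eq_ofReal_abs] using this
  have derivative_le : ‖iteratedFDeriv ℝ (n + 1) u (x + t • h) fun _ ↦ h‖ₑ ≤
      ‖iteratedFDeriv ℝ (n + 1) u (x + t • h)‖ₑ * ‖h‖ₑ ^ (n + 1) := by
    have := (iteratedFDeriv ℝ (n + 1) u (x + t • h)).le_opNNNorm fun _ ↦ h
    rw [Finset.prod_const, Finset.card_univ, Fintype.card_fin] at this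
    simp only [enorm_eq_nnnorm]
    exact_mod_cast this
  calc _ ≤ ((n + 1) * ‖t‖ₑ) ^ n *
        (‖iteratedFDeriv ℝ (n + 1) u (x + t • h)‖ₑ * ‖h‖ₑ ^ (n + 1)) := by
        rw [enorm_smul, enorm_pow]
        gcongr
    _ = _ := by
        rw [mul_pow]
        ring

theorem enorm_taylor_remainder_le {j : ℕ} (hj : j ≤ n + 1) :
    ‖(n ! : ℝ)⁻¹ • ∫ t in (1 : ℝ)..j,
        (j - t) ^ n • iteratedFDeriv ℝ (n + 1) u (x + t • h) fun _ ↦ h‖ₑ ≤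
      (n + 1) ^ n * ∫⁻ t in Ioc (0 : ℝ) (n + 1),
        ‖t‖ₑ ^ n * ‖h‖ₑ ^ (n + 1) * ‖iteratedFDeriv ℝ (n + 1) u (x + t • h)‖ₑ := by
  have enorm_inv_factorial_le : ‖(n ! : ℝ)⁻¹‖ₑ ≤ 1 := by
    rw [enorm_inv (by positivity), Real.enorm_natCast, ENNReal.inv_le_one]
    exact_mod_cast n.factorial_pos
  have uIoc_subset : uIoc (1 : ℝ) j ⊆ Ioc 0 (n + 1) := by
    have hj' : (j : ℝ) ≤ n + 1 := mod_cast hj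
    exact Ioc_subset_Ioc (le_min zero_le_one j.cast_nonneg) (max_le (by simp) hj')
  calc _ ≤ 1 * ∫⁻ t in uIoc (1 : ℝ) j,
          ‖((j : ℝ) - t) ^ n • iteratedFDeriv ℝ (n + 1) u (x + t • h) fun _ ↦ h‖ₑ := by
        rw [enorm_smul]
        gcongr
        exact (enorm_le_iff_norm_le.2 (intervalIntegral.norm_intervalIntegral_eq _ _ _ _).le).trans
          (enorm_integral_le_lintegral_enorm _)
    _ ≤ ∫⁻ t in uIoc (1 : ℝ) j, (n + 1) ^ n *
          (‖t‖ₑ ^ n * ‖h‖ₑ ^ (n + 1) * ‖iteratedFDeriv ℝ (n + 1) u (x + t • h)‖ₑ) := by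
        rw [one_mul]
        exact setLIntegral_mono' measurableSet_uIoc fun t ht ↦
          enorm_sub_pow_smul_iteratedFDeriv_le hj ht
    _ ≤ _ := by
        rw [lintegral_const_mul' _ _ (by finiteness)]
        gcongr

variable [CompleteSpace F]

theorem map_add_smul_eq_sum_add_integral_iteratedFDeriv {a b : ℝ}
    (hu : ∀ t ∈ uIcc a b, ContDiffAt ℝ (n + 1) u (x + t • h)) :
    u (x + b • h) =
      ∑ i ∈ Finset.range (n + 1),
        (b - a) ^ i • ((i ! : ℝ)⁻¹ • iteratedFDeriv ℝ i u (x + a • h) fun _ ↦ h) +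
      (n ! : ℝ)⁻¹ • ∫ t in a..b,
        (b - t) ^ n • iteratedFDeriv ℝ (n + 1) u (x + t • h) fun _ ↦ h := by
  have point_eq (t : ℝ) : x + a • h + t • (b - a) • h = x + (a + (b - a) * t) • h := by module
  have contDiffAt_segment : ∀ t ∈ Icc (0 : ℝ) 1,
      ContDiffAt ℝ (n + 1) u (x + a • h + t • (b - a) • h) := by
    intro t ht
    rw [point_eq]
    refine hu _ (segment_eq_uIcc a b ▸ ?_)
    exact segment_eq_image' ℝ a b ▸ ⟨t, ht, by simp [mul_comm]⟩
  have remainder_eq : ∫ t in (0 : ℝ)..1, (1 - t) ^ n •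
        iteratedFDeriv ℝ (n + 1) u (x + a • h + t • (b - a) • h) (fun _ ↦ (b - a) • h) =
      ∫ t in a..b, (b - t) ^ n • iteratedFDeriv ℝ (n + 1) u (x + t • h) fun _ ↦ h := by
    have change_of_variables := intervalIntegral.smul_integral_comp_add_mul (a := 0) (b := 1)
      (fun t ↦ (b - t) ^ n • iteratedFDeriv ℝ (n + 1) u (x + t • h) fun _ ↦ h) (b - a) a
    simp only [mul_zero, add_zero, mul_one, add_sub_cancel] at change_of_variables
    rw [← change_of_variables, ← intervalIntegral.integral_smul]
    refine intervalIntegral.integral_congr fun t _ ↦ ?_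
    simp only [point_eq]
    simp only [ContinuousMultilinearMap.map_smul_univ, Finset.prod_const, Finset.card_univ,
      Fintype.card_fin, smul_smul]
    congr 1
    rw [show b - (a + (b - a) * t) = (b - a) * (1 - t) by ring, mul_pow]
    ring
  have taylor := map_add_eq_sum_add_integral_iteratedFDeriv contDiffAt_segment
  rw [remainder_eq, show x + a • h + (b - a) • h = x + b • h by module] at taylor
  refine taylor.trans (congrArg (· + _) (Finset.sum_congr rfl fun i _ ↦ ?_))
  simp only [ContinuousMultilinearMap.map_smul_univ, Finset.prod_const, Finset.card_univ,
    Fintype.card_fin]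
  rw [smul_comm]

theorem enorm_fwdDiff_iter_comp_ray_le
    (hu : ∀ t ∈ Icc (0 : ℝ) (n + 1), ContDiffAt ℝ (n + 1) u (x + t • h)) :
    ‖(fwdDiff 1)^[n + 1] (fun t : ℝ ↦ u (x + t • h)) 0‖ₑ ≤
      2 ^ (n + 1) * (n + 1) ^ n * ∫⁻ t in Ioc (0 : ℝ) (n + 1),
        ‖t‖ₑ ^ n * ‖h‖ₑ ^ (n + 1) * ‖iteratedFDeriv ℝ (n + 1) u (x + t • h)‖ₑ := by
  set I := ∫⁻ t in Ioc (0 : ℝ) (n + 1),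
    ‖t‖ₑ ^ n * ‖h‖ₑ ^ (n + 1) * ‖iteratedFDeriv ℝ (n + 1) u (x + t • h)‖ₑ
  let taylor (s : ℝ) : F := ∑ i ∈ Finset.range (n + 1),
    (s - 1) ^ i • ((i ! : ℝ)⁻¹ • iteratedFDeriv ℝ i u (x + (1 : ℝ) • h) fun _ ↦ h)
  let remainder (s : ℝ) : F := u (x + s • h) - taylor s
  have remainder_le : ∀ j ∈ Finset.range (n + 1 + 1),
      ‖remainder (0 + j • 1)‖ₑ ≤ (n + 1) ^ n * I := by
    intro j hj
    replace hj : j ≤ n + 1 := by simpa [Nat.lt_succ_iff] using hj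
    have uIcc_subset : uIcc (1 : ℝ) j ⊆ Icc 0 (n + 1) :=
      uIcc_subset_Icc ⟨zero_le_one, by simp⟩ ⟨j.cast_nonneg, mod_cast hj⟩
    simp only [remainder, taylor, zero_add, nsmul_eq_mul, mul_one]
    rw [map_add_smul_eq_sum_add_integral_iteratedFDeriv fun t ht ↦ hu t (uIcc_subset ht),
      add_sub_cancel_left]
    exact enorm_taylor_remainder_le hj
  have decomposition : (fun t : ℝ ↦ u (x + t • h)) = taylor + remainder := by
    ext t
    simp [remainder]
  rw [decomposition, fwdDiff_iter_add, fwdDiff_iter_sum_sub_pow_smul_eq_zero, zero_add]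
  calc _ ≤ ∑ j ∈ Finset.range (n + 1 + 1), (n + 1).choose j * ‖remainder (0 + j • 1)‖ₑ :=
        enorm_fwdDiff_iter_le 1 remainder (n + 1) 0
    _ ≤ ∑ j ∈ Finset.range (n + 1 + 1), (n + 1).choose j * ((n + 1) ^ n * I) := by
        gcongr with j hj
        exact remainder_le j hj
    _ = _ := by
        rw [← Finset.sum_mul, ← Nat.cast_sum, Nat.sum_range_choose, mul_assoc]
        norm_cast

theorem enorm_le_sum_add_lintegral_ray
    (hu : ∀ t ∈ Icc (0 : ℝ) (n + 1), ContDiffAt ℝ (n + 1) u (x + t • h)) :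
    ‖u x‖ₑ ≤
      ∑ j ∈ Finset.range (n + 1), (n + 1).choose (j + 1) * ‖u (x + ((j + 1 : ℕ) : ℝ) • h)‖ₑ +
      2 ^ (n + 1) * (n + 1) ^ n * ∫⁻ t in Ioc (0 : ℝ) (n + 1),
        ‖t‖ₑ ^ n * ‖h‖ₑ ^ (n + 1) * ‖iteratedFDeriv ℝ (n + 1) u (x + t • h)‖ₑ := by
  have isolate := enorm_le_sum_add_enorm_fwdDiff_iter 1 (fun t : ℝ ↦ u (x + t • h)) (n + 1) 0
  simp only [zero_smul, add_zero, zero_add, nsmul_eq_mul, mul_one] at isolate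
  exact isolate.trans (by gcongr; exact enorm_fwdDiff_iter_comp_ray_le hu)

end TaylorAlongLine

section Polar

open Metric Module Set

theorem lintegral_Ioi_inv_enorm_pow_le {d : ℕ} (hd : d ≠ 0) {a : ℝ} (ha : 0 ≤ a) :
    ∫⁻ s in Ioi a, (‖s‖ₑ ^ (d + 1))⁻¹ ≤ (‖a‖ₑ ^ d)⁻¹ := by
  rcases ha.eq_or_lt with rfl | ha
  · simp [hd]
  have exponent_lt : -((d : ℝ) + 1) < -1 := by
    have : (0 : ℝ) < d := by positivity
    linarith
  have integrand_eq : ∀ s ∈ Ioi a,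
      (‖s‖ₑ ^ (d + 1))⁻¹ = ENNReal.ofReal (s ^ (-((d : ℝ) + 1))) := by
    intro s hs
    have hs : 0 < s := ha.trans hs
    rw [Real.rpow_neg hs.le, ENNReal.ofReal_inv_of_pos (by positivity),
      Real.enorm_of_nonneg hs.le, ← ENNReal.ofReal_pow hs.le]
    norm_cast
  rw [setLIntegral_congr_fun measurableSet_Ioi integrand_eq,
    ← ofReal_integral_eq_lintegral_ofReal (integrableOn_Ioi_rpow_of_lt exponent_lt ha)
      (ae_restrict_of_forall_mem measurableSet_Ioi fun s hs ↦ Real.rpow_nonneg (ha.trans hs).le _),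
    integral_Ioi_rpow_of_lt exponent_lt ha, Real.enorm_of_nonneg ha.le,
    ← ENNReal.ofReal_pow ha.le, ← ENNReal.ofReal_inv_of_pos (by positivity)]
  apply ENNReal.ofReal_le_ofReal
  rw [show -((d : ℝ) + 1) + 1 = -d by ring, Real.rpow_neg ha.le, Real.rpow_natCast, neg_div_neg_eq]
  exact div_le_self (by positivity) (mod_cast Nat.one_le_iff_ne_zero.2 hd)

theorem lintegral_indicator_Ioi_div_mul_le {d : ℕ} (hd : d ≠ 0) {r : ℝ} (hr : 0 < r) {a : ℝ}
    (ha : 0 ≤ a) (S : Set ℝ) (c : ℝ≥0∞) :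
    ∫⁻ s in S, (Ioi (a / r)).indicator (fun s ↦ (‖s‖ₑ ^ (d + 1))⁻¹ * c) s ≤
      ‖r‖ₑ ^ d * ((‖a‖ₑ ^ d)⁻¹ * c) := by
  have enorm_div_pow_inv : (‖a / r‖ₑ ^ d)⁻¹ = ‖r‖ₑ ^ d * (‖a‖ₑ ^ d)⁻¹ := by
    have enorm_r_ne_zero : ‖r‖ₑ ≠ 0 := enorm_ne_zero.2 hr.ne'
    rw [div_eq_mul_inv, enorm_mul, enorm_inv hr.ne', mul_pow,
      ENNReal.mul_inv (.inr (by finiteness)) (.inl (by finiteness)), ← ENNReal.inv_pow, inv_inv,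
      mul_comm]
  calc _ ≤ ∫⁻ s, (Ioi (a / r)).indicator (fun s ↦ (‖s‖ₑ ^ (d + 1))⁻¹ * c) s :=
        setLIntegral_le_lintegral _ _
    _ = (∫⁻ s in Ioi (a / r), (‖s‖ₑ ^ (d + 1))⁻¹) * c := by
        rw [lintegral_indicator measurableSet_Ioi, lintegral_mul_const _ (by fun_prop)]
    _ ≤ (‖a / r‖ₑ ^ d)⁻¹ * c := by
        gcongr
        exact lintegral_Ioi_inv_enorm_pow_le hd (by positivity)
    _ = _ := by rw [enorm_div_pow_inv, mul_assoc]

variable {E : Type*} [NormedAddCommGroup E]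

theorem inv_enorm_pow_mul_enorm_pow_le {d k : ℕ} (hdk : d ≤ k)
    {R : ℝ} {z : E} (hz : z ∈ ball 0 R) :
    (‖z‖ₑ ^ d)⁻¹ * ‖z‖ₑ ^ k ≤ ‖R‖ₑ ^ (k - d) := by
  have enorm_le : ‖z‖ₑ ≤ ‖R‖ₑ :=
    enorm_le_iff_norm_le.2 ((mem_ball_zero_iff.1 hz).le.trans (Real.le_norm_self R))
  calc _ = (‖z‖ₑ ^ d)⁻¹ * ‖z‖ₑ ^ d * ‖z‖ₑ ^ (k - d) := by
        rw [mul_assoc, ← pow_add, Nat.add_sub_cancel' hdk]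
    _ ≤ 1 * ‖R‖ₑ ^ (k - d) := by
        gcongr
        exact ENNReal.inv_mul_le_one _
    _ = _ := one_mul _

theorem add_smul_mem_ball [NormedSpace ℝ E] {x h : E} {r t m : ℝ} (hh : h ∈ ball 0 r)
    (ht : t ∈ Icc 0 m) (hm : 0 < m) : x + t • h ∈ ball x (m * r) := by
  rw [mem_ball_zero_iff] at hh
  rw [mem_ball_iff_norm, add_sub_cancel_left, norm_smul, Real.norm_of_nonneg ht.1]
  exact mul_lt_mul_of_le_of_lt_of_nonneg_of_pos ht.2 hh (norm_nonneg h) hm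

variable [MeasurableSpace E] [BorelSpace E]

theorem setLIntegral_ball_comp_add_left (μ : Measure E) [μ.IsAddLeftInvariant] (x : E) (r : ℝ)
    (f : E → ℝ≥0∞) :
    ∫⁻ z in ball 0 r, f (x + z) ∂μ = ∫⁻ y in ball x r, f y ∂μ := by
  have := (measurePreserving_add_left μ x).setLIntegral_comp_preimage_emb
    (measurableEmbedding_addLeft x) f (ball x r)
  rwa [preimage_add_ball, sub_self] at this

variable [NormedSpace ℝ E] [FiniteDimensional ℝ E] (μ : Measure E) [μ.IsAddHaarMeasure]

theorem setLIntegral_ball_comp_smul {s : ℝ} (hs : s ≠ 0) (r : ℝ) (f : E → ℝ≥0∞) :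
    ∫⁻ h in ball 0 r, f (s • h) ∂μ =
      (‖s‖ₑ ^ finrank ℝ E)⁻¹ * ∫⁻ z in ball 0 (‖s‖ * r), f z ∂μ := by
  let dilation : E ≃ᵐ E := MeasurableEquiv.smul₀ s hs
  have preimage_ball : dilation ⁻¹' ball 0 (‖s‖ * r) = ball 0 r := by
    ext h
    simp [dilation, norm_smul, hs]
  have map_eq : μ.map dilation = (‖s‖ₑ ^ finrank ℝ E)⁻¹ • μ := by
    rw [MeasurableEquiv.coe_smul₀, Measure.map_addHaar_smul μ hs, abs_inv, abs_pow,
      ENNReal.ofReal_inv_of_pos (by positivity), ENNReal.ofReal_pow (abs_nonneg s),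
      Real.enorm_eq_ofReal_abs]
  calc ∫⁻ h in ball 0 r, f (s • h) ∂μ
      = ∫⁻ z, f z ∂(μ.restrict (dilation ⁻¹' ball 0 (‖s‖ * r))).map dilation := by
        rw [preimage_ball, lintegral_map_equiv]
        rfl
    _ = _ := by
        rw [← dilation.restrict_map, map_eq, Measure.restrict_smul, lintegral_smul_measure,
          smul_eq_mul]

theorem setLIntegral_ball_inv_enorm_mul_comp_smul_le {r m s : ℝ} (hr : 0 < r) (hs : s ∈ Ioc 0 m)
    {Φ : E → ℝ≥0∞} (hΦ : Measurable Φ) :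
    ∫⁻ h in ball 0 r, ‖s‖ₑ⁻¹ * Φ (s • h) ∂μ ≤ ∫⁻ z in ball 0 (m * r),
      (Ioi (‖z‖ / r)).indicator (fun s ↦ (‖s‖ₑ ^ (finrank ℝ E + 1))⁻¹ * Φ z) s ∂μ := by
  have ball_subset : ball (0 : E) (‖s‖ * r) ⊆ ball 0 (m * r) := by
    gcongr
    exact (Real.norm_of_nonneg hs.1.le).trans_le hs.2
  have mem_Ioi_of_mem_ball : ∀ z ∈ ball (0 : E) (‖s‖ * r), s ∈ Ioi (‖z‖ / r) := by
    intro z hz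
    simpa [div_lt_iff₀ hr, abs_of_pos hs.1] using hz
  calc _ = ∫⁻ z in ball 0 (‖s‖ * r), (‖s‖ₑ ^ (finrank ℝ E + 1))⁻¹ * Φ z ∂μ := by
        rw [setLIntegral_ball_comp_smul μ hs.1.ne' r fun z ↦ ‖s‖ₑ⁻¹ * Φ z,
          lintegral_const_mul _ hΦ, lintegral_const_mul _ hΦ, ← mul_assoc, pow_succ,
          ENNReal.mul_inv (by simp) (by simp)]
    _ = ∫⁻ z in ball 0 (‖s‖ * r),
          (Ioi (‖z‖ / r)).indicator (fun s ↦ (‖s‖ₑ ^ (finrank ℝ E + 1))⁻¹ * Φ z) s ∂μ :=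
        setLIntegral_congr_fun measurableSet_ball fun z hz ↦ by
          rw [indicator_of_mem (mem_Ioi_of_mem_ball z hz)]
    _ ≤ _ := lintegral_mono_set ball_subset

theorem lintegral_ball_lintegral_ray_le [Nontrivial E] {r : ℝ} (hr : 0 < r) (m : ℝ)
    {Φ : E → ℝ≥0∞} (hΦ : Measurable Φ) :
    ∫⁻ h in ball 0 r, (∫⁻ s in Ioc 0 m, ‖s‖ₑ⁻¹ * Φ (s • h)) ∂μ ≤
      ‖r‖ₑ ^ finrank ℝ E * ∫⁻ z in ball 0 (m * r), (‖z‖ₑ ^ finrank ℝ E)⁻¹ * Φ z ∂μ := by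
  set d := finrank ℝ E
  let K (s : ℝ) (z : E) : ℝ≥0∞ := (Ioi (‖z‖ / r)).indicator (fun s ↦ (‖s‖ₑ ^ (d + 1))⁻¹ * Φ z) s
  have measurable_K : Measurable (Function.uncurry K) := by
    have measurableSet_cone : MeasurableSet {p : ℝ × E | ‖p.2‖ / r < p.1} :=
      measurableSet_lt (by fun_prop) (by fun_prop)
    exact Measurable.indicator (f := fun p : ℝ × E ↦ (‖p.1‖ₑ ^ (d + 1))⁻¹ * Φ p.2)
      (by fun_prop) measurableSet_cone
  calc _ = ∫⁻ s in Ioc 0 m, ∫⁻ h in ball 0 r, ‖s‖ₑ⁻¹ * Φ (s • h) ∂μ :=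
        lintegral_lintegral_swap (by fun_prop)
    _ ≤ ∫⁻ s in Ioc 0 m, ∫⁻ z in ball 0 (m * r), K s z ∂μ :=
        setLIntegral_mono' measurableSet_Ioc fun s hs ↦
          setLIntegral_ball_inv_enorm_mul_comp_smul_le μ hr hs hΦ
    _ = ∫⁻ z in ball 0 (m * r), (∫⁻ s in Ioc 0 m, K s z) ∂μ :=
        lintegral_lintegral_swap measurable_K.aemeasurable
    _ ≤ ∫⁻ z in ball 0 (m * r), ‖r‖ₑ ^ d * ((‖z‖ₑ ^ d)⁻¹ * Φ z) ∂μ :=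
        lintegral_mono fun z ↦ by
          simpa only [enorm_norm] using lintegral_indicator_Ioi_div_mul_le finrank_pos.ne' hr
            (norm_nonneg z) (Ioc 0 m) (Φ z)
    _ = _ := lintegral_const_mul _ (by fun_prop)

theorem setLIntegral_ball_comp_ray_le {r s m : ℝ} (hr : 0 ≤ r) (hs : s ∈ Icc 1 m) (x : E)
    (f : E → ℝ≥0∞) :
    ∫⁻ h in ball 0 r, f (x + s • h) ∂μ ≤ ∫⁻ y in ball x (m * r), f y ∂μ := by
  have one_le_norm : 1 ≤ ‖s‖ := hs.1.trans (Real.le_norm_self s)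
  have norm_le : ‖s‖ ≤ m := (Real.norm_of_nonneg (by linarith [hs.1])).trans_le hs.2
  have jacobian_le_one : (‖s‖ₑ ^ finrank ℝ E)⁻¹ ≤ 1 := by
    rw [ENNReal.inv_le_one]
    refine one_le_pow₀ ?_
    rw [← ofReal_norm]
    simpa
  calc _ = (‖s‖ₑ ^ finrank ℝ E)⁻¹ * ∫⁻ z in ball 0 (‖s‖ * r), f (x + z) ∂μ :=
        setLIntegral_ball_comp_smul μ (norm_pos_iff.1 (by linarith)) r fun z ↦ f (x + z)
    _ ≤ 1 * ∫⁻ z in ball 0 (m * r), f (x + z) ∂μ := by gcongr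
    _ = _ := by rw [one_mul, setLIntegral_ball_comp_add_left]

theorem sum_choose_mul_setLIntegral_ball_comp_ray_le (n : ℕ) {r : ℝ} (hr : 0 ≤ r) (x : E)
    (f : E → ℝ≥0∞) :
    ∑ j ∈ Finset.range n, n.choose (j + 1) * ∫⁻ h in ball 0 r, f (x + ((j + 1 : ℕ) : ℝ) • h) ∂μ ≤
      2 ^ n * ∫⁻ y in ball x (n * r), f y ∂μ := by
  calc _ ≤ ∑ j ∈ Finset.range n, n.choose (j + 1) * ∫⁻ y in ball x (n * r), f y ∂μ := by
        gcongr ∑ j ∈ Finset.range n, n.choose (j + 1) * ?_ with j hj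
        exact setLIntegral_ball_comp_ray_le μ hr ⟨by simp, mod_cast Finset.mem_range.1 hj⟩ x f
    _ ≤ _ := by
        rw [← Finset.sum_mul]
        gcongr
        exact_mod_cast sum_range_choose_succ_le n

theorem lintegral_ball_lintegral_ray_pow_le [Nontrivial E] {n : ℕ} (hn : finrank ℝ E ≤ n + 1)
    {r : ℝ} (hr : 0 < r) (m : ℝ) {G : E → ℝ≥0∞} (hG : Measurable G) :
    ∫⁻ h in ball 0 r, (∫⁻ s in Ioc 0 m, ‖s‖ₑ ^ n * ‖h‖ₑ ^ (n + 1) * G (s • h)) ∂μ ≤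
      ‖r‖ₑ ^ finrank ℝ E * (‖m * r‖ₑ ^ (n + 1 - finrank ℝ E) * ∫⁻ z in ball 0 (m * r), G z ∂μ) := by
  have homogenize (h : E) : ∀ s ∈ Ioc 0 m, ‖s‖ₑ ^ n * ‖h‖ₑ ^ (n + 1) * G (s • h) =
      ‖s‖ₑ⁻¹ * (‖s • h‖ₑ ^ (n + 1) * G (s • h)) := by
    intro s hs
    have enorm_s_ne_zero : ‖s‖ₑ ≠ 0 := enorm_ne_zero.2 hs.1.ne'
    rw [enorm_smul, mul_pow, pow_succ' ‖s‖ₑ, mul_assoc ‖s‖ₑ, mul_assoc ‖s‖ₑ, ← mul_assoc ‖s‖ₑ⁻¹,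
      ENNReal.inv_mul_cancel enorm_s_ne_zero enorm_ne_top, one_mul]
  calc _ = ∫⁻ h in ball 0 r,
          (∫⁻ s in Ioc 0 m, ‖s‖ₑ⁻¹ * (‖s • h‖ₑ ^ (n + 1) * G (s • h))) ∂μ :=
        lintegral_congr fun h ↦ setLIntegral_congr_fun measurableSet_Ioc (homogenize h)
    _ ≤ ‖r‖ₑ ^ finrank ℝ E * ∫⁻ z in ball 0 (m * r),
          (‖z‖ₑ ^ finrank ℝ E)⁻¹ * (‖z‖ₑ ^ (n + 1) * G z) ∂μ :=
        lintegral_ball_lintegral_ray_le μ hr m (Φ := fun z ↦ ‖z‖ₑ ^ (n + 1) * G z) (by fun_prop)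
    _ ≤ ‖r‖ₑ ^ finrank ℝ E * ∫⁻ z in ball 0 (m * r),
          ‖m * r‖ₑ ^ (n + 1 - finrank ℝ E) * G z ∂μ := by
        gcongr 1
        refine setLIntegral_mono' measurableSet_ball fun z hz ↦ ?_
        rw [← mul_assoc]
        gcongr
        exact inv_enorm_pow_mul_enorm_pow_le hn hz
    _ = _ := by rw [lintegral_const_mul _ hG]

theorem lintegral_ball_lintegral_ray_pow_le_of_continuousOn [Nontrivial E] {n : ℕ}
    (hn : finrank ℝ E ≤ n + 1) {r : ℝ} (hr : 0 < r) (m : ℝ) {x : E} {G : E → ℝ≥0∞}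
    (hG : ContinuousOn G (ball x (m * r))) :
    ∫⁻ h in ball 0 r, (∫⁻ s in Ioc 0 m, ‖s‖ₑ ^ n * ‖h‖ₑ ^ (n + 1) * G (x + s • h)) ∂μ ≤
      ‖r‖ₑ ^ finrank ℝ E * (‖m * r‖ₑ ^ (n + 1 - finrank ℝ E) * ∫⁻ y in ball x (m * r), G y ∂μ) := by
  let G₀ : E → ℝ≥0∞ := (ball 0 (m * r)).indicator fun z ↦ G (x + z)
  have measurable_G₀ : Measurable G₀ := by
    classical
    have continuousOn_comp : ContinuousOn (fun z ↦ G (x + z)) (ball 0 (m * r)) :=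
      hG.comp (by fun_prop) fun z hz ↦ by simpa using hz
    simp only [G₀, ← piecewise_eq_indicator]
    exact continuousOn_comp.measurable_piecewise continuousOn_const measurableSet_ball
  calc _ = ∫⁻ h in ball 0 r, (∫⁻ s in Ioc 0 m, ‖s‖ₑ ^ n * ‖h‖ₑ ^ (n + 1) * G₀ (s • h)) ∂μ :=
        setLIntegral_congr_fun measurableSet_ball fun h hh ↦
          setLIntegral_congr_fun measurableSet_Ioc fun s hs ↦ by
            have ray_mem : s • h ∈ ball (0 : E) (m * r) := by
              simpa using add_smul_mem_ball (x := 0) hh ⟨hs.1.le, hs.2⟩ (hs.1.trans_le hs.2)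
            simp only [G₀, indicator_of_mem ray_mem]
    _ ≤ _ := lintegral_ball_lintegral_ray_pow_le μ hn hr m measurable_G₀
    _ = _ := by
        rw [← setLIntegral_ball_comp_add_left μ x, setLIntegral_indicator measurableSet_ball,
          inter_self]

end Polar

section AveragedEstimate

open Metric Module Set

variable {E F : Type*} [NormedAddCommGroup E] [NormedSpace ℝ E] [FiniteDimensional ℝ E]
  [Nontrivial E] [MeasurableSpace E] [BorelSpace E] (μ : Measure E) [μ.IsAddHaarMeasure]
  [NormedAddCommGroup F] [NormedSpace ℝ F] [CompleteSpace F] {u : E → F} {x : E}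

theorem lintegral_sum_const_mul_add_const_mul {α ι : Type*} [MeasurableSpace α] {ν : Measure α}
    {s : Finset ι} {f : ι → α → ℝ≥0∞} (hf : ∀ i ∈ s, AEMeasurable (f i) ν) (c : ι → ℝ≥0∞)
    {b : ℝ≥0∞} (hb : b ≠ ∞) (g : α → ℝ≥0∞) :
    ∫⁻ a, (∑ i ∈ s, c i * f i a + b * g a) ∂ν =
      ∑ i ∈ s, c i * ∫⁻ a, f i a ∂ν + b * ∫⁻ a, g a ∂ν := by
  rw [lintegral_add_left' (Finset.aemeasurable_fun_sum _ fun i hi ↦ (hf i hi).const_mul _),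
    lintegral_finsetSum' _ fun i hi ↦ (hf i hi).const_mul _, lintegral_const_mul' _ _ hb]
  congr 1
  exact Finset.sum_congr rfl fun i hi ↦ lintegral_const_mul'' _ (hf i hi)

theorem enorm_mul_measure_ball_zero_le {n : ℕ} (hn : finrank ℝ E ≤ n + 1) {r : ℝ} (hr : 0 < r)
    (hu : ContDiffOn ℝ (n + 1) u (ball x ((n + 1) * r))) :
    ‖u x‖ₑ * μ (ball 0 r) ≤ 2 ^ (n + 1) * (∫⁻ y in ball x ((n + 1) * r), ‖u y‖ₑ ∂μ +
      (n + 1) ^ n * (‖r‖ₑ ^ finrank ℝ E * (‖(n + 1) * r‖ₑ ^ (n + 1 - finrank ℝ E) *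
        ∫⁻ y in ball x ((n + 1) * r), ‖iteratedFDeriv ℝ (n + 1) u y‖ₑ ∂μ))) := by
  have ray_mem_ball {h : E} (hh : h ∈ ball 0 r) {t : ℝ} (ht : t ∈ Icc (0 : ℝ) (n + 1)) :
      x + t • h ∈ ball x ((n + 1) * r) := add_smul_mem_ball hh ht (by positivity)
  have contDiffAt_ray : ∀ h ∈ ball (0 : E) r, ∀ t ∈ Icc (0 : ℝ) (n + 1),
      ContDiffAt ℝ (n + 1) u (x + t • h) := fun h hh t ht ↦
    hu.contDiffAt (isOpen_ball.mem_nhds (ray_mem_ball hh ht))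
  have continuousOn_derivative :
      ContinuousOn (fun y ↦ ‖iteratedFDeriv ℝ (n + 1) u y‖ₑ) (ball x ((n + 1) * r)) :=
    ((hu.continuousOn_iteratedFDerivWithin le_rfl isOpen_ball.uniqueDiffOn).congr
      (iteratedFDerivWithin_of_isOpen (n + 1) isOpen_ball).symm).enorm
  have aemeasurable_values : ∀ j ∈ Finset.range (n + 1), AEMeasurable
      (fun h ↦ ‖u (x + ((j + 1 : ℕ) : ℝ) • h)‖ₑ) (μ.restrict (ball 0 r)) := fun j hj ↦
    ((hu.continuousOn.comp (by fun_prop) fun h hh ↦ ray_mem_ball hh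
      ⟨by positivity, mod_cast Finset.mem_range.1 hj⟩).enorm).aemeasurable measurableSet_ball
  calc _ = ∫⁻ _ in ball 0 r, ‖u x‖ₑ ∂μ := (setLIntegral_const _ _).symm
    _ ≤ ∫⁻ h in ball 0 r, (∑ j ∈ Finset.range (n + 1),
          (n + 1).choose (j + 1) * ‖u (x + ((j + 1 : ℕ) : ℝ) • h)‖ₑ +
        2 ^ (n + 1) * (n + 1) ^ n * ∫⁻ t in Ioc (0 : ℝ) (n + 1),
          ‖t‖ₑ ^ n * ‖h‖ₑ ^ (n + 1) * ‖iteratedFDeriv ℝ (n + 1) u (x + t • h)‖ₑ) ∂μ :=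
        setLIntegral_mono' measurableSet_ball fun h hh ↦
          enorm_le_sum_add_lintegral_ray (contDiffAt_ray h hh)
    _ = ∑ j ∈ Finset.range (n + 1), (n + 1).choose (j + 1) *
          ∫⁻ h in ball 0 r, ‖u (x + ((j + 1 : ℕ) : ℝ) • h)‖ₑ ∂μ +
        2 ^ (n + 1) * (n + 1) ^ n * ∫⁻ h in ball 0 r, (∫⁻ t in Ioc (0 : ℝ) (n + 1),
          ‖t‖ₑ ^ n * ‖h‖ₑ ^ (n + 1) * ‖iteratedFDeriv ℝ (n + 1) u (x + t • h)‖ₑ) ∂μ :=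
        lintegral_sum_const_mul_add_const_mul aemeasurable_values _ (by finiteness) _
    _ ≤ _ := by
        rw [mul_add, ← mul_assoc (2 ^ (n + 1))]
        gcongr
        · simpa using sum_choose_mul_setLIntegral_ball_comp_ray_le μ (n + 1) hr.le x (‖u ·‖ₑ)
        · exact lintegral_ball_lintegral_ray_pow_le_of_continuousOn μ hn hr _
            continuousOn_derivative

theorem enorm_mul_measure_ball_le {k : ℕ} (hk : finrank ℝ E ≤ k) {ρ : ℝ} (hρ : 0 < ρ)
    (hu : ContDiffOn ℝ k u (ball x ρ)) :
    ‖u x‖ₑ * μ (ball x ρ) ≤ (2 * k) ^ k * (∫⁻ y in ball x ρ, ‖u y‖ₑ ∂μ +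
      ‖ρ‖ₑ ^ k * ∫⁻ y in ball x ρ, ‖iteratedFDeriv ℝ k u y‖ₑ ∂μ) := by
  obtain ⟨n, rfl⟩ : ∃ n, k = n + 1 :=
    Nat.exists_eq_succ_of_ne_zero (finrank_pos.trans_le hk).ne'
  obtain ⟨r, rfl⟩ : ∃ r, ρ = (n + 1) * r := ⟨ρ / (n + 1), by field_simp⟩
  have hr : 0 < r := pos_of_mul_pos_right hρ (by positivity)
  have measure_ball_eq : μ (ball x ((n + 1) * r)) = (n + 1) ^ finrank ℝ E * μ (ball 0 r) := by
    rw [Measure.addHaar_ball_mul_of_pos μ x (by positivity), ENNReal.ofReal_pow (by positivity)]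
    norm_cast
  have enorm_radius : ‖(n + 1) * r‖ₑ = (n + 1) * ‖r‖ₑ := by
    rw [enorm_mul]
    exact_mod_cast congrArg (· * ‖r‖ₑ) (Real.enorm_natCast (n + 1))
  have one_le_base : (1 : ℝ≥0∞) ≤ n + 1 := le_add_self
  set V := ∫⁻ y in ball x ((n + 1) * r), ‖u y‖ₑ ∂μ
  set D := ∫⁻ y in ball x ((n + 1) * r), ‖iteratedFDeriv ℝ (n + 1) u y‖ₑ ∂μ
  calc ‖u x‖ₑ * μ (ball x ((n + 1) * r))
      = (n + 1) ^ finrank ℝ E * (‖u x‖ₑ * μ (ball 0 r)) := by rw [measure_ball_eq]; ring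
    _ ≤ (n + 1) ^ finrank ℝ E * (2 ^ (n + 1) * (V + (n + 1) ^ n * (‖r‖ₑ ^ finrank ℝ E *
          (‖(n + 1) * r‖ₑ ^ (n + 1 - finrank ℝ E) * D)))) := by
        gcongr _ * ?_
        exact enorm_mul_measure_ball_zero_le μ hk hr (by exact_mod_cast hu)
    _ = 2 ^ (n + 1) * ((n + 1) ^ finrank ℝ E * V +
          (n + 1) ^ n * (‖(n + 1) * r‖ₑ ^ (n + 1) * D)) := by
        rw [← pow_mul_pow_sub ‖(n + 1) * r‖ₑ hk, enorm_radius, mul_pow _ _ (finrank ℝ E)]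
        ring
    _ ≤ 2 ^ (n + 1) * ((n + 1) ^ (n + 1) * V +
          (n + 1) ^ (n + 1) * (‖(n + 1) * r‖ₑ ^ (n + 1) * D)) := by
        gcongr
        exact n.le_succ
    _ = _ := by
        push_cast
        rw [mul_pow]
        ring

theorem setLIntegral_enorm_le_lintegral_truncation_add {α G : Type*} [MeasurableSpace α]
    [NormedAddCommGroup G] (ν : Measure α) {B Ω : Set α} (hB : B ⊆ Ω) (f : α → G) {η : ℝ}
    (hη : 0 ≤ η) :
    ∫⁻ y in B, ‖f y‖ₑ ∂ν ≤
      ∫⁻ y in Ω, ENNReal.ofReal (max (‖f y‖ - η) 0) ∂ν + ENNReal.ofReal η * ν B := by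
  have enorm_le (y : α) : ‖f y‖ₑ ≤ ENNReal.ofReal (max (‖f y‖ - η) 0) + ENNReal.ofReal η := by
    rw [← ofReal_norm, ← ENNReal.ofReal_add (le_max_right _ _) hη]
    exact ENNReal.ofReal_le_ofReal (by linarith [le_max_left (‖f y‖ - η) 0])
  calc _ ≤ ∫⁻ y in B, (ENNReal.ofReal (max (‖f y‖ - η) 0) + ENNReal.ofReal η) ∂ν :=
        lintegral_mono enorm_le
    _ = ∫⁻ y in B, ENNReal.ofReal (max (‖f y‖ - η) 0) ∂ν + ENNReal.ofReal η * ν B := by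
        rw [lintegral_add_right _ measurable_const, setLIntegral_const]
    _ ≤ _ := by gcongr

theorem enorm_mul_measure_ball_le_lintegral_truncation {k : ℕ} (hk : finrank ℝ E ≤ k) {Ω : Set E}
    {η ρ : ℝ} (hη : 0 ≤ η) (hρ : 0 < ρ) (hu : ContDiffOn ℝ k u (ball x ρ)) (hball : ball x ρ ⊆ Ω) :
    ‖u x‖ₑ * μ (ball x ρ) ≤ (2 * k) ^ k * (2 * ENNReal.ofReal η * μ (ball x ρ) +
      ENNReal.ofReal (ρ ^ k) *
        ∫⁻ y in Ω, ENNReal.ofReal (max (‖iteratedFDerivWithin ℝ k u Ω y‖ - η / ρ ^ k) 0) ∂μ +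
      ∫⁻ y in Ω, ENNReal.ofReal (max (‖u y‖ - η) 0) ∂μ) := by
  have derivative_eq : ∀ y ∈ ball x ρ,
      ‖iteratedFDeriv ℝ k u y‖ₑ = ‖iteratedFDerivWithin ℝ k u Ω y‖ₑ := by
    intro y hy
    have mem_nhds : Ω ∈ 𝓝 y := mem_of_superset (isOpen_ball.mem_nhds hy) hball
    rw [← iteratedFDerivWithin_univ, iteratedFDerivWithin_congr_set (eventuallyEq_univ.2 mem_nhds)]
  have scaled_level : ENNReal.ofReal (ρ ^ k) * ENNReal.ofReal (η / ρ ^ k) = ENNReal.ofReal η := by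
    rw [← ENNReal.ofReal_mul (by positivity), mul_div_cancel₀ η (by positivity)]
  refine (enorm_mul_measure_ball_le μ hk hρ hu).trans (mul_le_mul_right ?_ _)
  rw [setLIntegral_congr_fun measurableSet_ball derivative_eq, Real.enorm_of_nonneg hρ.le,
    ← ENNReal.ofReal_pow hρ.le]
  calc _ ≤ ∫⁻ y in Ω, ENNReal.ofReal (max (‖u y‖ - η) 0) ∂μ +
          ENNReal.ofReal η * μ (ball x ρ) + ENNReal.ofReal (ρ ^ k) *
        (∫⁻ y in Ω, ENNReal.ofReal (max (‖iteratedFDerivWithin ℝ k u Ω y‖ - η / ρ ^ k) 0) ∂μ +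
          ENNReal.ofReal (η / ρ ^ k) * μ (ball x ρ)) := by
        gcongr
        · exact setLIntegral_enorm_le_lintegral_truncation_add μ hball u hη
        · exact setLIntegral_enorm_le_lintegral_truncation_add μ hball _ (by positivity)
    _ = _ := by
        rw [mul_add (ENNReal.ofReal (ρ ^ k)), ← mul_assoc (ENNReal.ofReal (ρ ^ k)) (.ofReal _),
          scaled_level]
        ring

theorem enorm_le_lintegral_truncation {k : ℕ} (hk : finrank ℝ E ≤ k) {Ω : Set E} {η ρ : ℝ}
    (hη : 0 ≤ η) (hρ : 0 < ρ) (hu : ContDiffOn ℝ k u (ball x ρ)) (hball : ball x ρ ⊆ Ω) :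
    ‖u x‖ₑ ≤ (2 * k) ^ k * (2 * ENNReal.ofReal η + (μ (ball 0 1))⁻¹ *
      (ENNReal.ofReal (ρ ^ (k - finrank ℝ E)) *
        ∫⁻ y in Ω, ENNReal.ofReal (max (‖iteratedFDerivWithin ℝ k u Ω y‖ - η / ρ ^ k) 0) ∂μ +
      ENNReal.ofReal ((ρ ^ finrank ℝ E)⁻¹) *
        ∫⁻ y in Ω, ENNReal.ofReal (max (‖u y‖ - η) 0) ∂μ)) := by
  have measure_pos : μ (ball x ρ) ≠ 0 := (measure_ball_pos μ x hρ).ne'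
  have measure_ne_top : μ (ball x ρ) ≠ ∞ := measure_ball_lt_top.ne
  have inv_measure_eq :
      (μ (ball x ρ))⁻¹ = (μ (ball 0 1))⁻¹ * ENNReal.ofReal ((ρ ^ finrank ℝ E)⁻¹) := by
    rw [Measure.addHaar_ball_of_pos μ x hρ, ENNReal.mul_inv (.inr measure_ball_lt_top.ne)
      (.inl ENNReal.ofReal_ne_top), ENNReal.ofReal_inv_of_pos (by positivity), mul_comm]
  have scale_eq : ENNReal.ofReal (ρ ^ (k - finrank ℝ E)) =
      ENNReal.ofReal ((ρ ^ finrank ℝ E)⁻¹) * ENNReal.ofReal (ρ ^ k) := by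
    rw [← ENNReal.ofReal_mul (by positivity), pow_sub₀ ρ hρ.ne' hk, mul_comm]
  have averaged := enorm_mul_measure_ball_le_lintegral_truncation μ hk hη hρ hu hball
  rw [← ENNReal.le_div_iff_mul_le (.inl measure_pos) (.inl measure_ne_top), div_eq_mul_inv,
    mul_assoc, add_assoc, add_mul, mul_assoc (2 * _),
    ENNReal.mul_inv_cancel measure_pos measure_ne_top, mul_one, inv_measure_eq] at averaged
  refine averaged.trans_eq ?_
  rw [scale_eq]
  ring

end AveragedEstimate

open Metric Module in
theorem truncated_Wk1_embedding_general {E : Type*} [NormedAddCommGroup E] [NormedSpace ℝ E]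
    [FiniteDimensional ℝ E] [Nontrivial E] [MeasurableSpace E] [BorelSpace E] (μ : Measure E)
    [μ.IsAddHaarMeasure] {k : ℕ} (hk : finrank ℝ E ≤ k) :
    ∃ C : ℝ, 0 < C ∧ ∀ (F : Type*) [NormedAddCommGroup F] [NormedSpace ℝ F] [CompleteSpace F]
      (Ω : Set E) (u : E → F) (η ρ : ℝ) (x : E), 0 ≤ η → 0 < ρ → ball x ρ ⊆ Ω →
        ContDiffOn ℝ k u (ball x ρ) →
        ENNReal.ofReal ‖u x‖ ≤ ENNReal.ofReal C *
          (ENNReal.ofReal η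
            + ENNReal.ofReal (ρ ^ (k - finrank ℝ E)) *
                (∫⁻ y in Ω,
                  ENNReal.ofReal (max (‖iteratedFDerivWithin ℝ k u Ω y‖ - η / ρ ^ k) 0) ∂μ)
            + ENNReal.ofReal ((ρ ^ finrank ℝ E)⁻¹) *
                ∫⁻ y in Ω, ENNReal.ofReal (max (‖u y‖ - η) 0) ∂μ) := by
  have k_pos : 0 < k := finrank_pos.trans_le hk
  set w := μ.real (ball 0 1)
  have w_pos : 0 < w := ENNReal.toReal_pos (measure_ball_pos μ 0 one_pos).ne' measure_ball_lt_top.ne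
  have inv_measure_eq : (μ (ball 0 1))⁻¹ = ENNReal.ofReal w⁻¹ := by
    rw [ENNReal.ofReal_inv_of_pos w_pos, ofReal_measureReal measure_ball_lt_top.ne]
  have ofReal_constant : ENNReal.ofReal ((2 * k) ^ k * (2 + w⁻¹)) =
      (2 * k) ^ k * (2 + ENNReal.ofReal w⁻¹) := by
    rw [ENNReal.ofReal_mul (by positivity), ENNReal.ofReal_add zero_le_two (by positivity)]
    norm_cast
  refine ⟨(2 * k) ^ k * (2 + w⁻¹), by positivity, fun F _ _ _ Ω u η ρ x hη hρ hball hu ↦ ?_⟩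
  rw [ofReal_norm, ofReal_constant]
  refine (enorm_le_lintegral_truncation μ hk hη hρ hu hball).trans ?_
  rw [inv_measure_eq, mul_assoc, add_assoc, mul_add (2 + ENNReal.ofReal w⁻¹)]
  gcongr
  · exact le_self_add
  · exact le_add_self

/-- Truncated `W^{k,1}` Sobolev embedding on a domain of dimension `k`
(Proposition 3.6). -/
theorem truncated_Wk1_embedding (k : ℕ) (hk : 1 ≤ k) :
    ∃ C : ℝ, 0 < C ∧ ∀ (ν : ℕ), 1 ≤ ν →
      ∀ (Ω : Set (EuclideanSpace ℝ (Fin k))), IsOpen Ω →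
      ∀ (u : EuclideanSpace ℝ (Fin k) → EuclideanSpace ℝ (Fin ν)),
        ContDiffOn ℝ k u Ω →
      ∀ (η ρ : ℝ), 0 < η → 0 < ρ →
      ∀ x ∈ Ω, Metric.ball x ρ ⊆ Ω →
        ENNReal.ofReal ‖u x‖ ≤ ENNReal.ofReal C *
          (ENNReal.ofReal η
            + (∫⁻ y in Ω,
                ENNReal.ofReal (max (‖iteratedFDerivWithin ℝ k u Ω y‖ - η / ρ ^ k) 0))
            + ENNReal.ofReal ((ρ ^ k)⁻¹) *
                ∫⁻ y in Ω, ENNReal.ofReal (max (‖u y‖ - η) 0)) := by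
  have : NeZero k := ⟨by lia⟩
  obtain ⟨C, C_pos, bound⟩ := truncated_Wk1_embedding_general
    (volume : Measure (EuclideanSpace ℝ (Fin k))) finrank_euclideanSpace_fin.le
  refine ⟨C, C_pos, fun ν _ Ω _ u hu η ρ hη hρ x _ hball ↦ ?_⟩
  simpa using bound (EuclideanSpace ℝ (Fin ν)) Ω u η ρ x hη.le hρ hball (hu.mono hball)
end

section
/- For every integer m ≥ 1, every s ∈ (0,1) and every p ∈ [1,∞) there exists a constant C > 0 such that for every integer ν ≥ 1, every open set Ω ⊆ ℝ^m, all measurable maps u₀, u₁ : Ω → ℝ^ν and every ρ > 0, one has ∬_{Ω×Ω} ‖(u₀−u₁)(x) − (u₀−u₁)(y)‖^p / ‖x−y‖^{m+sp} dx dy ≤ C ( ∬_{{(x,y) ∈ Ω×Ω : ‖x−y‖ ≤ ρ}} (‖u₀(x)−u₀(y)‖^p + ‖u₁(x)−u₁(y)‖^p) / ‖x−y‖^{m+sp} dx dy + ρ^{−sp} ∫_Ω ‖u₀−u₁‖^p ). -/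
open MeasureTheory Filter Topology ENNReal

/-!
Cut the double integral along `‖x - y‖ ≤ ρ`. Near the diagonal, the difference of `u₀ - u₁` is
split as a difference of `u₀` minus a difference of `u₁`. Away from the diagonal, it is split into
the values of `u₀ - u₁` at `x` and at `y`, each of which is integrated against the kernel
`‖x - y‖ ^ (-(m + s p))` restricted to `‖x - y‖ > ρ`; this kernel has mass `ρ ^ (-(s p))` up to a
constant, by homogeneity.
-/

open Module (finrank)

lemma norm_sub_rpow_le_two_rpow_mul_add {F : Type*} [SeminormedAddCommGroup F] (a b : F) {p : ℝ}
    (hp : 0 ≤ p) : ‖a - b‖ ^ p ≤ 2 ^ p * (‖a‖ ^ p + ‖b‖ ^ p) := by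
  have h_max : ‖a - b‖ ≤ 2 * max ‖a‖ ‖b‖ := by
    rw [two_mul]
    exact (norm_sub_le a b).trans (add_le_add (le_max_left _ _) (le_max_right _ _))
  calc ‖a - b‖ ^ p ≤ (2 * max ‖a‖ ‖b‖) ^ p := by gcongr
    _ = 2 ^ p * max (‖a‖ ^ p) (‖b‖ ^ p) := by
        rw [Real.mul_rpow zero_le_two (by positivity),
          Real.rpow_max (norm_nonneg a) (norm_nonneg b) hp]
    _ ≤ 2 ^ p * (‖a‖ ^ p + ‖b‖ ^ p) := by
        gcongr
        exact max_le_add_of_nonneg (by positivity) (by positivity)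

section Convolution

variable {G : Type*} [AddGroup G] [MeasurableSpace G] [MeasurableAdd₂ G] [MeasurableNeg G]
  {μ ν : Measure G} [SFinite μ] {f k : G → ℝ≥0∞}

lemma lintegral_prod_fst_mul_comp_sub [μ.IsAddLeftInvariant] [μ.IsNegInvariant]
    (hf : AEMeasurable f ν) (hk : Measurable k) :
    ∫⁻ z, f z.1 * k (z.1 - z.2) ∂ν.prod μ = (∫⁻ x, f x ∂ν) * ∫⁻ y, k y ∂μ := by
  have h_meas : AEMeasurable (fun z => f z.1 * k (z.1 - z.2)) (ν.prod μ) :=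
    hf.comp_fst.mul (by fun_prop)
  rw [lintegral_prod _ h_meas, ← lintegral_mul_const'' _ hf]
  refine lintegral_congr fun x => ?_
  dsimp only
  rw [lintegral_const_mul _ (by fun_prop), lintegral_sub_left_eq_self]

lemma lintegral_prod_snd_mul_comp_sub [SFinite ν] [μ.IsAddRightInvariant]
    (hf : AEMeasurable f ν) (hk : Measurable k) :
    ∫⁻ z, f z.2 * k (z.1 - z.2) ∂μ.prod ν = (∫⁻ x, f x ∂ν) * ∫⁻ y, k y ∂μ := by
  have h_meas : AEMeasurable (fun z => f z.2 * k (z.1 - z.2)) (μ.prod ν) :=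
    hf.comp_snd.mul (by fun_prop)
  rw [lintegral_prod_symm _ h_meas, ← lintegral_mul_const'' _ hf]
  refine lintegral_congr fun y => ?_
  dsimp only
  rw [lintegral_const_mul _ (by fun_prop), lintegral_sub_right_eq_self]

lemma setLIntegral_prod_add_mul_comp_sub_le [μ.IsAddLeftInvariant] [μ.IsAddRightInvariant]
    [μ.IsNegInvariant] {Ω : Set G} (hf : AEMeasurable f (μ.restrict Ω)) (hk : Measurable k) :
    ∫⁻ z in Ω ×ˢ Ω, (f z.1 + f z.2) * k (z.1 - z.2) ∂μ.prod μ
      ≤ 2 * (∫⁻ y, k y ∂μ) * ∫⁻ x in Ω, f x ∂μ := by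
  have h_fst : ∫⁻ z in Ω ×ˢ Ω, f z.1 * k (z.1 - z.2) ∂μ.prod μ
      ≤ (∫⁻ x in Ω, f x ∂μ) * ∫⁻ y, k y ∂μ := by
    have h_univ : (μ.prod μ).restrict (Ω ×ˢ Set.univ) = (μ.restrict Ω).prod μ := by
      rw [← Measure.prod_restrict, Measure.restrict_univ]
    rw [← lintegral_prod_fst_mul_comp_sub hf hk, ← h_univ]
    exact lintegral_mono_set (Set.prod_mono_right (Set.subset_univ Ω))
  have h_snd : ∫⁻ z in Ω ×ˢ Ω, f z.2 * k (z.1 - z.2) ∂μ.prod μ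
      ≤ (∫⁻ x in Ω, f x ∂μ) * ∫⁻ y, k y ∂μ := by
    have h_univ : (μ.prod μ).restrict (Set.univ ×ˢ Ω) = μ.prod (μ.restrict Ω) := by
      rw [← Measure.prod_restrict, Measure.restrict_univ]
    rw [← lintegral_prod_snd_mul_comp_sub hf hk, ← h_univ]
    exact lintegral_mono_set (Set.prod_mono_left (Set.subset_univ Ω))
  have h_meas : AEMeasurable (fun z => f z.1 * k (z.1 - z.2)) ((μ.prod μ).restrict (Ω ×ˢ Ω)) := by
    rw [← Measure.prod_restrict]
    exact hf.comp_fst.mul (by fun_prop)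
  simp only [add_mul]
  rw [lintegral_add_left' h_meas]
  exact (add_le_add h_fst h_snd).trans_eq (by ring)

end Convolution

section TailKernel

variable {E : Type*} [SeminormedAddCommGroup E]

/-- The kernel `‖y‖ ^ (-r)` cut off to `‖y‖ > ρ`, which governs the part of a Gagliardo seminorm
away from the diagonal. -/
noncomputable def tailKernel (r ρ : ℝ) : E → ℝ≥0∞ :=
  {y | ρ < ‖y‖}.indicator fun y => ENNReal.ofReal (‖y‖ ^ r)⁻¹

lemma measurable_tailKernel [MeasurableSpace E] [OpensMeasurableSpace E] (r ρ : ℝ) :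
    Measurable (tailKernel r ρ : E → ℝ≥0∞) :=
  Measurable.indicator (continuous_norm.measurable.pow_const r).inv.ennreal_ofReal
    (isOpen_lt continuous_const continuous_norm).measurableSet

lemma tailKernel_of_lt {r ρ : ℝ} {y : E} (hy : ρ < ‖y‖) :
    tailKernel r ρ y = ENNReal.ofReal (‖y‖ ^ r)⁻¹ :=
  Set.indicator_of_mem (s := {y : E | ρ < ‖y‖}) hy _

lemma tailKernel_of_le {r ρ : ℝ} {y : E} (hy : ‖y‖ ≤ ρ) : tailKernel r ρ y = 0 :=
  Set.indicator_of_notMem (s := {y : E | ρ < ‖y‖}) hy.not_gt _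

lemma tailKernel_one_le {r : ℝ} (hr : 0 ≤ r) (y : E) :
    tailKernel r 1 y ≤ ENNReal.ofReal (2 ^ r) * ENNReal.ofReal ((1 + ‖y‖) ^ (-r)) := by
  rcases le_or_gt ‖y‖ 1 with hy | hy
  · simp [tailKernel_of_le hy]
  · rw [tailKernel_of_lt hy, ← ENNReal.ofReal_mul (by positivity)]
    gcongr
    calc (‖y‖ ^ r)⁻¹ = 2 ^ r * ((2 * ‖y‖) ^ r)⁻¹ := by
          rw [Real.mul_rpow zero_le_two (norm_nonneg y)]
          field_simp
      _ ≤ 2 ^ r * ((1 + ‖y‖) ^ r)⁻¹ := by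
          gcongr
          linarith
      _ = 2 ^ r * (1 + ‖y‖) ^ (-r) := by rw [Real.rpow_neg (by positivity)]

lemma tailKernel_eq_rpow_mul_tailKernel_one [NormedSpace ℝ E] (r : ℝ) {ρ : ℝ} (hρ : 0 < ρ) (y : E) :
    tailKernel r ρ y = ENNReal.ofReal (ρ ^ (-r)) * tailKernel r 1 (ρ⁻¹ • y) := by
  have h_norm : ‖ρ⁻¹ • y‖ = ‖y‖ / ρ := by
    rw [norm_smul_of_nonneg (by positivity), inv_mul_eq_div]
  rcases le_or_gt ‖y‖ ρ with hy | hy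
  · rw [tailKernel_of_le hy, tailKernel_of_le (by rwa [h_norm, div_le_one hρ]), mul_zero]
  · rw [tailKernel_of_lt hy, tailKernel_of_lt (by rwa [h_norm, one_lt_div hρ]),
      ← ENNReal.ofReal_mul (by positivity), h_norm, Real.div_rpow (norm_nonneg y) hρ.le,
      Real.rpow_neg hρ.le, inv_div, ← mul_div_assoc, inv_mul_cancel₀ (by positivity), one_div]

end TailKernel

section TailKernelMass

variable {E : Type*} [NormedAddCommGroup E] [NormedSpace ℝ E] [FiniteDimensional ℝ E]
  [MeasurableSpace E] [BorelSpace E] (μ : Measure E) [μ.IsAddHaarMeasure]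

lemma lintegral_comp_smul_eq_mul_lintegral (f : E → ℝ≥0∞) {c : ℝ} (hc : c ≠ 0) :
    ∫⁻ x, f (c • x) ∂μ = ENNReal.ofReal |(c ^ finrank ℝ E)⁻¹| * ∫⁻ x, f x ∂μ := by
  rw [← smul_eq_mul, ← lintegral_smul_measure, ← Measure.map_addHaar_smul μ hc]
  exact (lintegral_map_equiv f (Homeomorph.smulOfNeZero c hc).toMeasurableEquiv).symm

lemma lintegral_tailKernel_one_lt_top {r : ℝ} (hr : finrank ℝ E < r) :
    ∫⁻ y, tailKernel r 1 y ∂μ < ∞ := by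
  have hr₀ : 0 ≤ r := (Nat.cast_nonneg _).trans hr.le
  calc ∫⁻ y, tailKernel r 1 y ∂μ
      ≤ ∫⁻ y, ENNReal.ofReal (2 ^ r) * ENNReal.ofReal ((1 + ‖y‖) ^ (-r)) ∂μ :=
        lintegral_mono (tailKernel_one_le hr₀)
    _ = ENNReal.ofReal (2 ^ r) * ∫⁻ y, ENNReal.ofReal ((1 + ‖y‖) ^ (-r)) ∂μ :=
        lintegral_const_mul' _ _ ofReal_ne_top
    _ < ∞ := mul_lt_top ofReal_lt_top (finite_integral_one_add_norm hr)

lemma lintegral_tailKernel (r : ℝ) {ρ : ℝ} (hρ : 0 < ρ) :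
    ∫⁻ y, tailKernel r ρ y ∂μ
      = ENNReal.ofReal (ρ ^ (finrank ℝ E - r)) * ∫⁻ y, tailKernel r 1 y ∂μ := by
  have h_jacobian : |((ρ⁻¹ : ℝ) ^ finrank ℝ E)⁻¹| = ρ ^ (finrank ℝ E : ℝ) := by
    rw [inv_pow, inv_inv, abs_of_pos (by positivity), Real.rpow_natCast]
  simp only [tailKernel_eq_rpow_mul_tailKernel_one r hρ]
  rw [lintegral_const_mul' _ _ ofReal_ne_top,
    lintegral_comp_smul_eq_mul_lintegral μ _ (inv_ne_zero hρ.ne'), h_jacobian, ← mul_assoc,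
    ← ENNReal.ofReal_mul (by positivity), ← Real.rpow_add hρ, neg_add_eq_sub]

end TailKernelMass

section Localization

variable {E F : Type*} [SeminormedAddCommGroup E] [SeminormedAddCommGroup F] {p r : ℝ}

/-- The pairs of points at distance at most `ρ`, to which a Gagliardo double integral is
localized. -/
def nearDiagonal (E : Type*) [SeminormedAddCommGroup E] (ρ : ℝ) : Set (E × E) :=
  {z | ‖z.1 - z.2‖ ≤ ρ}

lemma lintegral_norm_sub_sub_sub_rpow_div_le [MeasurableSpace E] (ξ : Measure (E × E))
    (hp : 0 ≤ p) (u₀ u₁ : E → F) :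
    ∫⁻ z, ENNReal.ofReal
        (‖(u₀ z.1 - u₁ z.1) - (u₀ z.2 - u₁ z.2)‖ ^ p / ‖z.1 - z.2‖ ^ r) ∂ξ
      ≤ ENNReal.ofReal (2 ^ p) * ∫⁻ z, ENNReal.ofReal
        ((‖u₀ z.1 - u₀ z.2‖ ^ p + ‖u₁ z.1 - u₁ z.2‖ ^ p) / ‖z.1 - z.2‖ ^ r) ∂ξ := by
  rw [← lintegral_const_mul' _ _ ofReal_ne_top]
  refine lintegral_mono fun z => ?_
  rw [← ENNReal.ofReal_mul (by positivity), ← mul_div_assoc, sub_sub_sub_comm]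
  gcongr
  exact norm_sub_rpow_le_two_rpow_mul_add _ _ hp

lemma indicator_compl_nearDiagonal_le (hp : 0 ≤ p) (ρ : ℝ) (w : E → F) (z : E × E) :
    (nearDiagonal E ρ)ᶜ.indicator
        (fun z => ENNReal.ofReal (‖w z.1 - w z.2‖ ^ p / ‖z.1 - z.2‖ ^ r)) z
      ≤ ENNReal.ofReal (2 ^ p) * ((ENNReal.ofReal (‖w z.1‖ ^ p) + ENNReal.ofReal (‖w z.2‖ ^ p))
        * tailKernel r ρ (z.1 - z.2)) := by
  refine Set.indicator_apply_le' (fun hz => ?_) fun _ => zero_le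
  rw [tailKernel_of_lt (not_le.1 hz), ← ENNReal.ofReal_add (by positivity) (by positivity),
    ← ENNReal.ofReal_mul (by positivity), ← ENNReal.ofReal_mul (by positivity), ← div_eq_mul_inv,
    ← mul_div_assoc]
  gcongr
  exact norm_sub_rpow_le_two_rpow_mul_add _ _ hp

variable [MeasurableSpace E] [BorelSpace E] [SecondCountableTopology E]

lemma measurableSet_nearDiagonal (ρ : ℝ) : MeasurableSet (nearDiagonal E ρ) :=
  measurableSet_le (by fun_prop) measurable_const

variable (μ : Measure E) [SFinite μ] [μ.IsAddLeftInvariant] [μ.IsNegInvariant]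

lemma setLIntegral_sdiff_nearDiagonal_le {Ω : Set E} {w : E → F}
    (hw : AEStronglyMeasurable w (μ.restrict Ω)) (hp : 0 ≤ p) (ρ : ℝ) :
    ∫⁻ z in Ω ×ˢ Ω \ nearDiagonal E ρ,
        ENNReal.ofReal (‖w z.1 - w z.2‖ ^ p / ‖z.1 - z.2‖ ^ r) ∂μ.prod μ
      ≤ ENNReal.ofReal (2 ^ p) * (2 * (∫⁻ y, tailKernel r ρ y ∂μ)
        * ∫⁻ x in Ω, ENNReal.ofReal (‖w x‖ ^ p) ∂μ) := by
  have hw_rpow : AEMeasurable (fun x => ENNReal.ofReal (‖w x‖ ^ p)) (μ.restrict Ω) :=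
    (hw.norm.aemeasurable.pow_const p).ennreal_ofReal
  rw [Set.sdiff_eq, Set.inter_comm, ← setLIntegral_indicator (measurableSet_nearDiagonal ρ).compl]
  refine (lintegral_mono (indicator_compl_nearDiagonal_le hp ρ w)).trans ?_
  rw [lintegral_const_mul' _ _ ofReal_ne_top]
  gcongr
  exact setLIntegral_prod_add_mul_comp_sub_le hw_rpow (measurable_tailKernel r ρ)

lemma gagliardo_seminorm_difference_le_near_add_far (hp : 0 ≤ p) {Ω : Set E} {u₀ u₁ : E → F}
    (hu : AEStronglyMeasurable (fun x => u₀ x - u₁ x) (μ.restrict Ω)) (ρ : ℝ) :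
    ∫⁻ z in Ω ×ˢ Ω, ENNReal.ofReal
        (‖(u₀ z.1 - u₁ z.1) - (u₀ z.2 - u₁ z.2)‖ ^ p / ‖z.1 - z.2‖ ^ r) ∂μ.prod μ
      ≤ ENNReal.ofReal (2 ^ p) *
        ((∫⁻ z in Ω ×ˢ Ω ∩ nearDiagonal E ρ, ENNReal.ofReal
            ((‖u₀ z.1 - u₀ z.2‖ ^ p + ‖u₁ z.1 - u₁ z.2‖ ^ p) / ‖z.1 - z.2‖ ^ r) ∂μ.prod μ)
          + 2 * (∫⁻ y, tailKernel r ρ y ∂μ)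
            * ∫⁻ x in Ω, ENNReal.ofReal (‖u₀ x - u₁ x‖ ^ p) ∂μ) := by
  rw [← lintegral_inter_add_sdiff _ (Ω ×ˢ Ω) (measurableSet_nearDiagonal ρ), mul_add]
  exact add_le_add (lintegral_norm_sub_sub_sub_rpow_div_le _ hp u₀ u₁)
    (setLIntegral_sdiff_nearDiagonal_le μ hu hp ρ)

end Localization

theorem gagliardo_seminorm_difference_localization_general
    {E : Type*} [NormedAddCommGroup E] [NormedSpace ℝ E] [FiniteDimensional ℝ E]
    [MeasurableSpace E] [BorelSpace E] (μ : Measure E) [μ.IsAddHaarMeasure]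
    {s p : ℝ} (hs : 0 < s) (hp : 0 < p) :
    ∃ C : ℝ, 0 < C ∧ ∀ (F : Type*) [SeminormedAddCommGroup F] (Ω : Set E) (u₀ u₁ : E → F),
      AEStronglyMeasurable (fun x => u₀ x - u₁ x) (μ.restrict Ω) → ∀ ρ : ℝ, 0 < ρ →
        ∫⁻ z in Ω ×ˢ Ω, ENNReal.ofReal (‖(u₀ z.1 - u₁ z.1) - (u₀ z.2 - u₁ z.2)‖ ^ p
            / ‖z.1 - z.2‖ ^ (finrank ℝ E + s * p)) ∂μ.prod μ
          ≤ ENNReal.ofReal C *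
            ((∫⁻ z in {z : E × E | z.1 ∈ Ω ∧ z.2 ∈ Ω ∧ ‖z.1 - z.2‖ ≤ ρ},
                ENNReal.ofReal ((‖u₀ z.1 - u₀ z.2‖ ^ p + ‖u₁ z.1 - u₁ z.2‖ ^ p)
                  / ‖z.1 - z.2‖ ^ (finrank ℝ E + s * p)) ∂μ.prod μ)
              + ENNReal.ofReal (ρ ^ (-(s * p))) *
                  ∫⁻ x in Ω, ENNReal.ofReal (‖u₀ x - u₁ x‖ ^ p) ∂μ) := by
  set r : ℝ := finrank ℝ E + s * p
  set K : ℝ≥0∞ := ∫⁻ y : E, tailKernel r 1 y ∂μ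
  have hK : K ≠ ∞ :=
    (lintegral_tailKernel_one_lt_top μ (lt_add_of_pos_right _ (mul_pos hs hp))).ne
  refine ⟨2 ^ p * (1 + 2 * K.toReal), by positivity, fun F _ Ω u₀ u₁ hu ρ hρ => ?_⟩
  have h_tail : ∫⁻ y : E, tailKernel r ρ y ∂μ = ENNReal.ofReal (ρ ^ (-(s * p))) * K := by
    rw [lintegral_tailKernel μ r hρ, sub_add_cancel_left]
  have h_const : ENNReal.ofReal (2 ^ p * (1 + 2 * K.toReal))
      = ENNReal.ofReal (2 ^ p) * (1 + 2 * K) := by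
    rw [ENNReal.ofReal_mul (by positivity), ENNReal.ofReal_add zero_le_one (by positivity),
      ENNReal.ofReal_mul zero_le_two, ENNReal.ofReal_toReal hK, ofReal_one, ofReal_ofNat]
  have h_near : {z : E × E | z.1 ∈ Ω ∧ z.2 ∈ Ω ∧ ‖z.1 - z.2‖ ≤ ρ} = Ω ×ˢ Ω ∩ nearDiagonal E ρ :=
    Set.ext fun _ => and_assoc.symm
  refine (gagliardo_seminorm_difference_le_near_add_far μ hp.le hu ρ).trans ?_
  rw [h_tail, h_const, h_near, mul_assoc (ENNReal.ofReal _) (1 + 2 * K), mul_add (1 + 2 * K)]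
  refine mul_le_mul_right (add_le_add ?_ ?_) _
  · exact le_mul_of_one_le_left zero_le le_self_add
  · rw [show ∀ R J : ℝ≥0∞, 2 * (R * K) * J = 2 * K * (R * J) from fun R J => by ring]
    exact mul_le_mul_left le_add_self _

/-- Localization estimate for the Gagliardo fractional seminorm of a difference
(Proposition 4.2). -/
theorem gagliardo_seminorm_difference_localization
    (m : ℕ) (hm : 1 ≤ m) (s : ℝ) (hs : s ∈ Set.Ioo (0:ℝ) 1)
    (p : ℝ) (hp : 1 ≤ p) :
    ∃ C : ℝ, 0 < C ∧ ∀ (ν : ℕ), 1 ≤ ν →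
      ∀ (Ω : Set (EuclideanSpace ℝ (Fin m)))
        (u₀ u₁ : EuclideanSpace ℝ (Fin m) → EuclideanSpace ℝ (Fin ν)),
        Measurable u₀ → Measurable u₁ →
      ∀ (ρ : ℝ), 0 < ρ →
        (∫⁻ z in Ω ×ˢ Ω,
            ENNReal.ofReal
              (‖(u₀ z.1 - u₁ z.1) - (u₀ z.2 - u₁ z.2)‖ ^ p
                / ‖z.1 - z.2‖ ^ ((m : ℝ) + s * p)))
          ≤ ENNReal.ofReal C *
            ((∫⁻ z in {z : EuclideanSpace ℝ (Fin m) × EuclideanSpace ℝ (Fin m) |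
                  z.1 ∈ Ω ∧ z.2 ∈ Ω ∧ ‖z.1 - z.2‖ ≤ ρ},
                ENNReal.ofReal
                  ((‖u₀ z.1 - u₀ z.2‖ ^ p + ‖u₁ z.1 - u₁ z.2‖ ^ p)
                    / ‖z.1 - z.2‖ ^ ((m : ℝ) + s * p)))
              + ENNReal.ofReal (ρ ^ (-(s * p))) *
                  ∫⁻ x in Ω, ENNReal.ofReal (‖u₀ x - u₁ x‖ ^ p)) := by
  obtain ⟨C, hC, h⟩ := gagliardo_seminorm_difference_localization_general
    (volume : Measure (EuclideanSpace ℝ (Fin m))) hs.1 (zero_lt_one.trans_le hp)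
  rw [finrank_euclideanSpace_fin] at h
  exact ⟨C, hC, fun ν _ Ω u₀ u₁ hu₀ hu₁ =>
    h _ Ω u₀ u₁ (hu₀.sub hu₁).aestronglyMeasurable⟩
end

section
/- Let m ≥ 1 and ν ≥ 1 be integers, let Ω ⊆ ℝ^m be a convex set, let s ∈ (0,1), p ∈ [1,∞), ρ > 0, let ℓ ≥ 1 be an integer, and let u : Ω → ℝ^ν be Borel measurable. Then ∬_{{(x,y) ∈ Ω×Ω : ‖x−y‖ ≤ ℓρ}} ‖u(x)−u(y)‖^p / ‖x−y‖^{m+sp} dx dy ≤ ℓ^{(1−s)p} ∬_{{(x,y) ∈ Ω×Ω : ‖x−y‖ ≤ ρ}} ‖u(x)−u(y)‖^p / ‖x−y‖^{m+sp} dx dy. -/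
open MeasureTheory Filter Topology ENNReal

/-!
Cut the segment from `x` to `y` into `ℓ` equal pieces with endpoints `xᵢ`, which stay in `Ω` by
convexity. The triangle inequality and Jensen's inequality give
`|u x - u y| ^ p ≤ ℓ ^ (p - 1) * ∑ |u xᵢ - u xᵢ₊₁| ^ p`, and since `|xᵢ - xᵢ₊₁| = |x - y| / ℓ`,
dividing by `|x - y| ^ (m + s * p)` costs a factor `ℓ ^ (-(m + s * p))`. For each `i` the linear map
`(x, y) ↦ (xᵢ, xᵢ₊₁)` has determinant `ℓ ^ (-m)` and sends pairs at distance at most `ℓ * ρ` to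
pairs at distance at most `ρ`. Changing variables in the `ℓ` terms gives the constant
`ℓ * ℓ ^ (p - 1) * ℓ ^ (-(m + s * p)) * ℓ ^ m = ℓ ^ ((1 - s) * p)`.
-/

/-- The pairs of points of `Ω` at distance at most `R`, on which the energy localized at scale `R`
is computed. -/
def closePairs {E : Type*} [PseudoMetricSpace E] (Ω : Set E) (R : ℝ) : Set (E × E) :=
  {z | z.1 ∈ Ω ∧ z.2 ∈ Ω ∧ dist z.1 z.2 ≤ R}

/-- The integrand `d(u x, u y) ^ p / d(x, y) ^ σ` of a fractional energy. On the diagonal the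
quotient has numerator `0 ^ p`, so it vanishes there for `p ≠ 0`. -/
noncomputable def gagliardoKernel {E F : Type*} [PseudoMetricSpace E] [PseudoMetricSpace F]
    (u : E → F) (p σ : ℝ) (z : E × E) : ℝ≥0∞ :=
  ENNReal.ofReal (dist (u z.1) (u z.2) ^ p / dist z.1 z.2 ^ σ)

/-- The Gagliardo energy of order `s` and exponent `p` of `u` on `Ω`, localized at scale `R`. -/
noncomputable def gagliardoEnergy {E F : Type*} [NormedAddCommGroup E] [NormedSpace ℝ E]
    [MeasurableSpace E] [PseudoMetricSpace F] (μ : Measure E) (Ω : Set E) (u : E → F) (s p R : ℝ) :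
    ℝ≥0∞ :=
  ∫⁻ z in closePairs Ω R, gagliardoKernel u p (Module.finrank ℝ E + s * p) z ∂μ.prod μ

/-- The endpoints of the piece of the segment from `z.1` to `z.2` between the parameters
`a` and `b`. -/
noncomputable def subsegment {E : Type*} [AddCommGroup E] [Module ℝ E] (a b : ℝ) (z : E × E) :
    E × E :=
  (AffineMap.lineMap z.1 z.2 a, AffineMap.lineMap z.1 z.2 b)

lemma dist_rpow_le_sum_dist_rpow {F : Type*} [PseudoMetricSpace F] {p : ℝ} (hp : 1 ≤ p)
    (f : ℕ → F) (n : ℕ) :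
    dist (f 0) (f n) ^ p ≤ (n : ℝ) ^ (p - 1) * ∑ i ∈ Finset.range n, dist (f i) (f (i + 1)) ^ p :=
  calc
    dist (f 0) (f n) ^ p ≤ (∑ i ∈ Finset.range n, dist (f i) (f (i + 1))) ^ p := by
      gcongr
      exact dist_le_range_sum_dist f n
    _ ≤ (n : ℝ) ^ (p - 1) * ∑ i ∈ Finset.range n, dist (f i) (f (i + 1)) ^ p := by
      simpa only [Finset.card_range] using Real.rpow_sum_le_const_mul_sum_rpow_of_nonneg
        (Finset.range n) hp fun i _ ↦ dist_nonneg (x := f i) (y := f (i + 1))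

section Pointwise

variable {E F : Type*} [SeminormedAddCommGroup E] [NormedSpace ℝ E] [PseudoMetricSpace F]

lemma dist_subsegment (a b : ℝ) (z : E × E) :
    dist (subsegment a b z).1 (subsegment a b z).2 = |b - a| * dist z.1 z.2 := by
  rw [subsegment, dist_lineMap_lineMap, Real.dist_eq, abs_sub_comm]

lemma subsegment_mem_closePairs {Ω : Set E} (hΩ : Convex ℝ Ω) {R R' a b : ℝ}
    (ha : a ∈ Set.Icc (0 : ℝ) 1) (hb : b ∈ Set.Icc (0 : ℝ) 1) (hR : |b - a| * R ≤ R') {z : E × E}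
    (hz : z ∈ closePairs Ω R) : subsegment a b z ∈ closePairs Ω R' := by
  obtain ⟨hz₁, hz₂, hzR⟩ := hz
  refine ⟨hΩ.lineMap_mem hz₁ hz₂ ha, hΩ.lineMap_mem hz₁ hz₂ hb, ?_⟩
  rw [dist_subsegment]
  exact (mul_le_mul_of_nonneg_left hzR (abs_nonneg _)).trans hR

lemma gagliardoKernel_le_sum_subsegment (u : E → F) {p : ℝ} (hp : 1 ≤ p) (σ : ℝ) {n : ℕ}
    (hn : 0 < n) (z : E × E) :
    gagliardoKernel u p σ z ≤ ∑ i ∈ Finset.range n, ENNReal.ofReal ((n : ℝ) ^ (p - 1 - σ)) *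
      gagliardoKernel u p σ (subsegment (i / n) ((i + 1) / n) z) := by
  have hn' : (0 : ℝ) < n := Nat.cast_pos.2 hn
  let node (i : ℕ) : E := AffineMap.lineMap z.1 z.2 ((i : ℝ) / n)
  have node_succ (i : ℕ) : subsegment ((i : ℝ) / n) ((i + 1) / n) z = (node i, node (i + 1)) := by
    simp only [subsegment, node, Nat.cast_succ]
  have dist_node (i : ℕ) : dist z.1 z.2 = n * dist (node i) (node (i + 1)) := by
    have h := dist_subsegment ((i : ℝ) / n) ((i + 1) / n) z
    rw [node_succ, ← sub_div, add_sub_cancel_left, abs_of_pos (by positivity)] at h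
    rw [h]
    field_simp
  have dist_u_le : dist (u z.1) (u z.2) ^ p ≤
      (n : ℝ) ^ (p - 1) * ∑ i ∈ Finset.range n, dist (u (node i)) (u (node (i + 1))) ^ p := by
    simpa [node, hn'.ne'] using dist_rpow_le_sum_dist_rpow hp (u ∘ node) n
  simp only [node_succ, gagliardoKernel, ← ENNReal.ofReal_mul (Real.rpow_nonneg hn'.le _)]
  rw [← ENNReal.ofReal_sum_of_nonneg fun i _ ↦ by positivity]
  refine ENNReal.ofReal_le_ofReal ?_
  calc
    dist (u z.1) (u z.2) ^ p / dist z.1 z.2 ^ σ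
      ≤ ((n : ℝ) ^ (p - 1) * ∑ i ∈ Finset.range n, dist (u (node i)) (u (node (i + 1))) ^ p) /
          dist z.1 z.2 ^ σ := by gcongr
    _ = ∑ i ∈ Finset.range n, (n : ℝ) ^ (p - 1 - σ) *
          (dist (u (node i)) (u (node (i + 1))) ^ p / dist (node i) (node (i + 1)) ^ σ) := by
      rw [Finset.mul_sum, Finset.sum_div]
      refine Finset.sum_congr rfl fun i _ ↦ ?_
      rw [dist_node i, Real.mul_rpow hn'.le dist_nonneg, Real.rpow_sub hn' (p - 1),
        mul_div_mul_comm]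

lemma indicator_gagliardoKernel_le_sum_subsegment {Ω : Set E} (hΩ : Convex ℝ Ω) (u : E → F)
    {p : ℝ} (hp : 1 ≤ p) (σ ρ : ℝ) {n : ℕ} (hn : 0 < n) (z : E × E) :
    (closePairs Ω (n * ρ)).indicator (gagliardoKernel u p σ) z ≤
      ∑ i ∈ Finset.range n, ENNReal.ofReal ((n : ℝ) ^ (p - 1 - σ)) *
        (closePairs Ω ρ).indicator (gagliardoKernel u p σ)
          (subsegment (i / n) ((i + 1) / n) z) := by
  have hn' : (0 : ℝ) < n := Nat.cast_pos.2 hn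
  refine Set.indicator_apply_le' (fun hz ↦ ?_) fun _ ↦ zero_le
  refine (gagliardoKernel_le_sum_subsegment u hp σ hn z).trans_eq ?_
  refine Finset.sum_congr rfl fun i hi ↦ ?_
  have hi_succ : (i : ℝ) + 1 ≤ n := mod_cast Finset.mem_range.1 hi
  have piece_mem : subsegment ((i : ℝ) / n) ((i + 1) / n) z ∈ closePairs Ω ρ := by
    refine subsegment_mem_closePairs hΩ ⟨by positivity, ?_⟩ ⟨by positivity, ?_⟩ ?_ hz
    · rw [div_le_one hn']
      linarith
    · rwa [div_le_one hn']
    · rw [← sub_div, add_sub_cancel_left, abs_of_pos (by positivity), one_div,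
        inv_mul_cancel_left₀ hn'.ne']
  rw [Set.indicator_of_mem piece_mem]

end Pointwise

lemma aemeasurable_gagliardoKernel {E F : Type*} [PseudoMetricSpace E] [SecondCountableTopology E]
    [MeasurableSpace E] [OpensMeasurableSpace E] [PseudoMetricSpace F] {μ : Measure E} [SFinite μ]
    {Ω : Set E} {u : E → F} (hu : AEStronglyMeasurable u (μ.restrict Ω)) (p σ R : ℝ) :
    AEMeasurable (gagliardoKernel u p σ) ((μ.prod μ).restrict (closePairs Ω R)) := by
  have hΩ : AEMeasurable (gagliardoKernel u p σ) ((μ.prod μ).restrict (Ω ×ˢ Ω)) := by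
    rw [← Measure.prod_restrict]
    have hdist : AEMeasurable (fun z : E × E ↦ dist (u z.1) (u z.2))
        ((μ.restrict Ω).prod (μ.restrict Ω)) := (hu.comp_fst.dist hu.comp_snd).aemeasurable
    unfold gagliardoKernel
    fun_prop
  have hsub : closePairs Ω R ⊆ Ω ×ˢ Ω := fun z hz ↦ ⟨hz.1, hz.2.1⟩
  exact hΩ.mono_set hsub

section Measure

variable {E F : Type*} [NormedAddCommGroup E] [NormedSpace ℝ E] [FiniteDimensional ℝ E]
  [MeasurableSpace E] [BorelSpace E] [PseudoMetricSpace F]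

lemma measurable_subsegment (a b : ℝ) : Measurable (subsegment a b : E × E → E × E) := by
  unfold subsegment
  simp only [AffineMap.lineMap_apply_module']
  fun_prop

variable (μ : Measure E) [μ.IsAddHaarMeasure]

lemma nullMeasurableSet_closePairs {Ω : Set E} (hΩ : Convex ℝ Ω) (R : ℝ) :
    NullMeasurableSet (closePairs Ω R) (μ.prod μ) := by
  have hΩμ : NullMeasurableSet Ω μ := hΩ.nullMeasurableSet μ
  have hdist : MeasurableSet {z : E × E | dist z.1 z.2 ≤ R} :=
    measurableSet_le (by fun_prop) (by fun_prop)
  exact (hΩμ.preimage Measure.quasiMeasurePreserving_fst).inter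
    ((hΩμ.preimage Measure.quasiMeasurePreserving_snd).inter hdist.nullMeasurableSet)

lemma lintegral_comp_smul {r : ℝ} (hr : r ≠ 0) {f : E → ℝ≥0∞} (hf : Measurable f) :
    ∫⁻ x, f (r • x) ∂μ = ENNReal.ofReal |(r ^ Module.finrank ℝ E)⁻¹| * ∫⁻ x, f x ∂μ := by
  rw [← lintegral_map hf (measurable_const_smul r), Measure.map_addHaar_smul μ hr,
    lintegral_smul_measure, smul_eq_mul]

lemma lintegral_comp_subsegment_of_measurable {a b : ℝ} (hab : a ≠ b) {G : E × E → ℝ≥0∞}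
    (hG : Measurable G) :
    ∫⁻ z, G (subsegment a b z) ∂μ.prod μ =
      ENNReal.ofReal |((b - a) ^ Module.finrank ℝ E)⁻¹| * ∫⁻ z, G z ∂μ.prod μ := by
  have translate_base (h : E) :
      ∫⁻ x, G (x + a • h, x + b • h) ∂μ = ∫⁻ x, G (x, x + (b - a) • h) ∂μ := by
    rw [← lintegral_add_right_eq_self (fun x ↦ G (x, x + (b - a) • h)) (a • h)]
    refine lintegral_congr fun x ↦ ?_
    rw [add_assoc, ← add_smul, add_sub_cancel]
  calc
    ∫⁻ z, G (subsegment a b z) ∂μ.prod μ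
      = ∫⁻ x, ∫⁻ y, G (subsegment a b (x, y)) ∂μ ∂μ :=
        lintegral_prod _ (hG.comp (measurable_subsegment a b)).aemeasurable
    _ = ∫⁻ x, ∫⁻ h, G (x + a • h, x + b • h) ∂μ ∂μ := by
      refine lintegral_congr fun x ↦ ?_
      rw [← lintegral_add_right_eq_self _ x]
      simp only [subsegment, AffineMap.lineMap_apply_module', add_sub_cancel_right, add_comm x]
    _ = ∫⁻ h, ∫⁻ x, G (x + a • h, x + b • h) ∂μ ∂μ := lintegral_lintegral_swap (by fun_prop)
    _ = ∫⁻ h, ∫⁻ x, G (x, x + (b - a) • h) ∂μ ∂μ := lintegral_congr translate_base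
    _ = ∫⁻ x, ∫⁻ h, G (x, x + (b - a) • h) ∂μ ∂μ := lintegral_lintegral_swap (by fun_prop)
    _ = ∫⁻ x, ENNReal.ofReal |((b - a) ^ Module.finrank ℝ E)⁻¹| * ∫⁻ y, G (x, y) ∂μ ∂μ := by
      refine lintegral_congr fun x ↦ ?_
      rw [lintegral_comp_smul μ (sub_ne_zero.2 hab.symm) (f := fun h ↦ G (x, x + h))
        (by fun_prop), lintegral_add_left_eq_self (fun y ↦ G (x, y)) x]
    _ = ENNReal.ofReal |((b - a) ^ Module.finrank ℝ E)⁻¹| * ∫⁻ z, G z ∂μ.prod μ := by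
      rw [lintegral_const_mul' _ _ ENNReal.ofReal_ne_top, ← lintegral_prod _ hG.aemeasurable]

lemma map_subsegment_prod {a b : ℝ} (hab : a ≠ b) :
    (μ.prod μ).map (subsegment a b) =
      ENNReal.ofReal |((b - a) ^ Module.finrank ℝ E)⁻¹| • μ.prod μ := by
  refine Measure.ext_of_lintegral _ fun G hG ↦ ?_
  rw [lintegral_map hG (measurable_subsegment a b), lintegral_smul_measure, smul_eq_mul,
    lintegral_comp_subsegment_of_measurable μ hab hG]

lemma aemeasurable_comp_subsegment {a b : ℝ} (hab : a ≠ b) {G : E × E → ℝ≥0∞}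
    (hG : AEMeasurable G (μ.prod μ)) :
    AEMeasurable (fun z ↦ G (subsegment a b z)) (μ.prod μ) := by
  refine AEMeasurable.comp_measurable ?_ (measurable_subsegment a b)
  rw [map_subsegment_prod μ hab]
  exact hG.smul_measure _

lemma lintegral_comp_subsegment {a b : ℝ} (hab : a ≠ b) {G : E × E → ℝ≥0∞}
    (hG : AEMeasurable G (μ.prod μ)) :
    ∫⁻ z, G (subsegment a b z) ∂μ.prod μ =
      ENNReal.ofReal |((b - a) ^ Module.finrank ℝ E)⁻¹| * ∫⁻ z, G z ∂μ.prod μ := by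
  have hmap := map_subsegment_prod μ hab
  rw [← lintegral_map' (hmap ▸ hG.smul_measure _) (measurable_subsegment a b).aemeasurable, hmap,
    lintegral_smul_measure, smul_eq_mul]

lemma lintegral_sum_comp_subsegment {n : ℕ} (hn : 0 < n) {G : E × E → ℝ≥0∞}
    (hG : AEMeasurable G (μ.prod μ)) :
    ∫⁻ z, ∑ i ∈ Finset.range n, G (subsegment (i / n) ((i + 1) / n) z) ∂μ.prod μ =
      ENNReal.ofReal ((n : ℝ) ^ (Module.finrank ℝ E + 1)) * ∫⁻ z, G z ∂μ.prod μ := by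
  have hn' : (0 : ℝ) < n := Nat.cast_pos.2 hn
  have length_eq (i : ℕ) : ((i : ℝ) + 1) / n - i / n = (n : ℝ)⁻¹ := by
    rw [← sub_div, add_sub_cancel_left, one_div]
  have params_ne (i : ℕ) : (i : ℝ) / n ≠ (i + 1) / n := by
    rw [ne_comm, ← sub_ne_zero, length_eq]
    positivity
  rw [lintegral_finsetSum' _ fun i _ ↦ aemeasurable_comp_subsegment μ (params_ne i) hG]
  simp only [lintegral_comp_subsegment μ (params_ne _) hG, length_eq, inv_pow, inv_inv,
    abs_of_pos (pow_pos hn' _), Finset.sum_const, Finset.card_range, nsmul_eq_mul]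
  rw [← mul_assoc, ← ENNReal.ofReal_natCast, ← ENNReal.ofReal_mul hn'.le, pow_succ']

theorem gagliardo_energy_rescaling_general {Ω : Set E} (hΩ : Convex ℝ Ω) (s : ℝ) {p : ℝ}
    (hp : 1 ≤ p) (ρ : ℝ) {ℓ : ℕ} (hℓ : 0 < ℓ) {u : E → F}
    (hu : AEStronglyMeasurable u (μ.restrict Ω)) :
    gagliardoEnergy μ Ω u s p (ℓ * ρ) ≤
      ENNReal.ofReal ((ℓ : ℝ) ^ ((1 - s) * p)) * gagliardoEnergy μ Ω u s p ρ := by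
  have hℓ' : (0 : ℝ) < ℓ := Nat.cast_pos.2 hℓ
  have hnull (R : ℝ) := nullMeasurableSet_closePairs μ hΩ R
  let d := Module.finrank ℝ E
  let σ : ℝ := d + s * p
  let c : ℝ := (ℓ : ℝ) ^ (p - 1 - σ)
  let K (R : ℝ) : E × E → ℝ≥0∞ := (closePairs Ω R).indicator (gagliardoKernel u p σ)
  have hK : AEMeasurable (K ρ) (μ.prod μ) :=
    (aemeasurable_indicator_iff₀ (hnull ρ)).2 (aemeasurable_gagliardoKernel hu p σ ρ)
  have energy_eq (R : ℝ) : gagliardoEnergy μ Ω u s p R = ∫⁻ z, K R z ∂μ.prod μ :=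
    (lintegral_indicator₀ (hnull R) _).symm
  have const_eq : (ℓ : ℝ) ^ (d + 1) * c = (ℓ : ℝ) ^ ((1 - s) * p) := by
    rw [← Real.rpow_natCast, ← Real.rpow_add hℓ']
    congr 1
    push_cast
    ring
  rw [energy_eq, energy_eq]
  calc
    ∫⁻ z, K (ℓ * ρ) z ∂μ.prod μ
      ≤ ∫⁻ z, ∑ i ∈ Finset.range ℓ,
          ENNReal.ofReal c * K ρ (subsegment (i / ℓ) ((i + 1) / ℓ) z) ∂μ.prod μ :=
        lintegral_mono (indicator_gagliardoKernel_le_sum_subsegment hΩ u hp σ ρ hℓ)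
    _ = ENNReal.ofReal ((ℓ : ℝ) ^ (d + 1)) * ∫⁻ z, ENNReal.ofReal c * K ρ z ∂μ.prod μ :=
        lintegral_sum_comp_subsegment μ hℓ (hK.const_mul _)
    _ = ENNReal.ofReal ((ℓ : ℝ) ^ ((1 - s) * p)) * ∫⁻ z, K ρ z ∂μ.prod μ := by
      rw [lintegral_const_mul' _ _ ENNReal.ofReal_ne_top, ← mul_assoc,
        ← ENNReal.ofReal_mul (by positivity), const_eq]

end Measure

/-- Global control of the Gagliardo fractional energy by its localization at
small scales on a convex domain (Proposition 4.4). -/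
theorem gagliardo_energy_rescaling
    (m ν : ℕ) (hm : 1 ≤ m) (hν : 1 ≤ ν)
    (Ω : Set (EuclideanSpace ℝ (Fin m))) (hΩ : Convex ℝ Ω)
    (s : ℝ) (hs : s ∈ Set.Ioo (0:ℝ) 1) (p : ℝ) (hp : 1 ≤ p)
    (ρ : ℝ) (hρ : 0 < ρ) (ℓ : ℕ) (hℓ : 1 ≤ ℓ)
    (u : EuclideanSpace ℝ (Fin m) → EuclideanSpace ℝ (Fin ν)) (hu : Measurable u) :
    (∫⁻ z in {z : EuclideanSpace ℝ (Fin m) × EuclideanSpace ℝ (Fin m) |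
          z.1 ∈ Ω ∧ z.2 ∈ Ω ∧ ‖z.1 - z.2‖ ≤ (ℓ : ℝ) * ρ},
        ENNReal.ofReal (‖u z.1 - u z.2‖ ^ p / ‖z.1 - z.2‖ ^ ((m : ℝ) + s * p)))
      ≤ ENNReal.ofReal ((ℓ : ℝ) ^ ((1 - s) * p)) *
        ∫⁻ z in {z : EuclideanSpace ℝ (Fin m) × EuclideanSpace ℝ (Fin m) |
            z.1 ∈ Ω ∧ z.2 ∈ Ω ∧ ‖z.1 - z.2‖ ≤ ρ},
          ENNReal.ofReal (‖u z.1 - u z.2‖ ^ p / ‖z.1 - z.2‖ ^ ((m : ℝ) + s * p)) := by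
  simpa only [gagliardoEnergy, closePairs, gagliardoKernel, dist_eq_norm,
    finrank_euclideanSpace_fin, Measure.volume_eq_prod] using
    gagliardo_energy_rescaling_general volume hΩ s hp ρ hℓ hu.aestronglyMeasurable
end

section
/- For all integers m ≥ 1, k ≥ 1 and every real p with 1 < p < ∞, there exist constants C > 0 and κ > 0 such that the following holds for every integer ν ≥ 1: if Ω ⊆ ℝ^m is open, u : Ω → ℝ^ν is bounded and k-times continuously differentiable, t > 0 and ρ > 0 satisfy (sup_{Ω}‖u‖)^k ≤ κ t^k ρ^k, and K ⊆ ℝ^m is a measurable set such that {x + y : x ∈ K, ‖y‖ < ρ} ⊆ Ω, then ∫_K (‖Du‖ − t)_+^{kp} ≤ C ∫_Ω ( (sup_{Ω}‖u‖)^{k−1} ‖D^k u‖ − κ t^k )_+^{p}. -/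
open MeasureTheory Filter Topology ENNReal

/-!
Write `k = d + 1` with `d ≥ 1`; for `k = 1` the two integrands agree. On an interval of length `l`,
a finite-difference stencil applied to the Taylor polynomial of `f` gives
`‖f'‖ l ≤ A (S + l ^ d ∫ ‖f⁽ᵏ⁾‖)`, where `S` bounds `‖f‖`. Around a point with `‖f'‖ > t`, the
smallness of `S` makes the second summand exceed `S` on the interval of length `ρ`, so by
continuity there is a shorter interval on which both summands equal `S`. There `‖f'‖ ^ k` is at most
a constant times the mean of `S ^ d ‖f⁽ᵏ⁾‖`, and since `t` is below this local bound of `‖f'‖`, half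
of that mean survives the truncation; Jensen's inequality then compares the `p`-th powers. The
Besicovitch covering theorem sums these local estimates, and Fubini's theorem along the lines in
finitely many directions, one of which sees `‖Du(x)‖` up to a constant, carries the inequality from
dimension one to any finite dimension.
-/

open scoped Nat

section Interpolation

/-- The weights of the finite-difference stencil on the nodes `0, …, d` that extracts the
coefficient of `X ^ n` from a polynomial of degree at most `d`. -/
noncomputable def finiteDiffWeight (d n : ℕ) : Fin (d + 1) → ℝ :=
  Matrix.vecMul (fun j : Fin (d + 1) ↦ if (j : ℕ) = n then 1 else 0)
    (Matrix.vandermonde fun i : Fin (d + 1) ↦ (i : ℝ))⁻¹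

theorem sum_finiteDiffWeight_mul_pow {d j : ℕ} (n : ℕ) (hj : j ≤ d) :
    ∑ i, finiteDiffWeight d n i * (i : ℝ) ^ j = if j = n then 1 else 0 := by
  have hdet : IsUnit (Matrix.vandermonde fun i : Fin (d + 1) ↦ (i : ℝ)).det :=
    (Matrix.det_vandermonde_ne_zero_iff.2 fun i i' h ↦ Fin.ext (Nat.cast_injective h)).isUnit
  have hmul : Matrix.vecMul (finiteDiffWeight d n)
      (Matrix.vandermonde fun i : Fin (d + 1) ↦ (i : ℝ)) =
        fun j : Fin (d + 1) ↦ if (j : ℕ) = n then 1 else 0 := by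
    rw [finiteDiffWeight, Matrix.vecMul_vecMul, Matrix.nonsing_inv_mul _ hdet, Matrix.vecMul_one]
  exact congrFun hmul ⟨j, Nat.lt_succ_of_le hj⟩

/-- The constant in the interpolation inequality bounding the `n`-th derivative of a function on an
interval by the function and its derivative of order `d + 1`. The summand `1` makes it positive
without an estimate of the weights. -/
noncomputable def derivInterpConst (d n : ℕ) : ℝ :=
  1 + n ! * (2 * (d + 1)) ^ n * ∑ i, |finiteDiffWeight d n i|

theorem derivInterpConst_pos (d n : ℕ) : 0 < derivInterpConst d n := by
  unfold derivInterpConst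
  positivity

theorem exists_step_forall_add_mul_mem_Icc {a b y : ℝ} (hy : y ∈ Set.Icc a b) (d : ℕ) :
    ∃ h : ℝ, |h| * (2 * (d + 1)) = b - a ∧ ∀ i : Fin (d + 1), y + i * h ∈ Set.Icc a b := by
  have hab : 0 ≤ b - a := by linarith [hy.1, hy.2]
  set h := (b - a) / (2 * (d + 1)) with hh
  have hstep : h * (2 * (d + 1)) = b - a := by rw [hh]; field_simp
  have h_nonneg : 0 ≤ h := by positivity
  have hnode (i : Fin (d + 1)) : 0 ≤ i * h ∧ i * h ≤ (b - a) / 2 := by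
    have hi : (i : ℝ) ≤ d + 1 := by exact_mod_cast i.isLt.le
    exact ⟨by positivity, by nlinarith⟩
  rcases le_total y ((a + b) / 2) with hmid | hmid
  · refine ⟨h, by rwa [abs_of_nonneg h_nonneg], fun i ↦ ⟨?_, ?_⟩⟩ <;>
      linarith [hnode i, hy.1]
  · refine ⟨-h, by rwa [abs_neg, abs_of_nonneg h_nonneg], fun i ↦ ⟨?_, ?_⟩⟩ <;>
      linarith [hnode i, hy.2]

variable {F : Type*} [NormedAddCommGroup F] [NormedSpace ℝ F] {f : ℝ → F} {Ω : Set ℝ}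
  {a b x y z S t ρ : ℝ} {d n : ℕ}

theorem sum_finiteDiffWeight_smul_taylorWithinEval (f : ℝ → F) (Ω : Set ℝ) (y h : ℝ)
    (hn : n ≤ d) :
    ∑ i, finiteDiffWeight d n i • taylorWithinEval f d Ω y (y + i * h) =
      ((n ! : ℝ)⁻¹ * h ^ n) • iteratedDerivWithin n f Ω y := by
  have hcoeff : ∀ j ∈ Finset.range (d + 1),
      ∑ i, finiteDiffWeight d n i • (((j ! : ℝ)⁻¹ * (y + i * h - y) ^ j) •
        iteratedDerivWithin j f Ω y) =
      (if j = n then ((j ! : ℝ)⁻¹ * h ^ j) • iteratedDerivWithin j f Ω y else 0) := by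
    intro j hj
    simp_rw [add_sub_cancel_left, mul_pow, smul_smul, ← Finset.sum_smul]
    rw [← ite_zero_smul, ← one_mul ((j ! : ℝ)⁻¹ * h ^ j), ← ite_zero_mul,
      ← sum_finiteDiffWeight_mul_pow n (Finset.mem_range_succ_iff.1 hj), Finset.sum_mul]
    congr! 2
    ring
  simp_rw [taylor_within_apply, Finset.smul_sum]
  rw [Finset.sum_comm, Finset.sum_congr rfl hcoeff, Finset.sum_ite_eq',
    if_pos (Finset.mem_range_succ_iff.2 hn)]

theorem norm_sub_le_integral_of_norm_deriv_le_of_mem_Icc {g g' : ℝ → F} {B : ℝ → ℝ}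
    (hg : ∀ s ∈ Set.Icc a b, HasDerivAt g (g' s) s) (hB : ContinuousOn B (Set.Icc a b))
    (hgB : ∀ s ∈ Set.Icc a b, ‖g' s‖ ≤ B s) (hy : y ∈ Set.Icc a b) (hz : z ∈ Set.Icc a b) :
    ‖g z - g y‖ ≤ ∫ s in a..b, B s := by
  wlog hyz : y ≤ z generalizing y z
  · rw [norm_sub_rev]
    exact this hz hy (le_of_not_ge hyz)
  have hsub : Set.Icc y z ⊆ Set.Icc a b := Set.Icc_subset_Icc hy.1 hz.2
  have hab : a ≤ b := hy.1.trans hy.2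
  calc ‖g z - g y‖ ≤ ∫ s in y..z, B s := by
        refine norm_sub_le_integral_of_norm_deriv_le_of_le hyz
          (fun s hs ↦ (hg s (hsub hs)).continuousAt.continuousWithinAt)
          (fun s hs ↦ (hg s (hsub (Set.Ioo_subset_Icc_self hs))).differentiableAt
            |>.differentiableWithinAt) ?_
          (ContinuousOn.intervalIntegrable (by rw [Set.uIcc_of_le hyz]; exact hB.mono hsub))
        refine Eventually.of_forall fun s hs ↦ ?_
        rw [(hg s (hsub (Set.Ioo_subset_Icc_self hs))).deriv]
        exact hgB s (hsub (Set.Ioo_subset_Icc_self hs))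
    _ ≤ ∫ s in a..b, B s := by
        refine intervalIntegral.integral_mono_interval hy.1 hyz hz.2 ?_
          (ContinuousOn.intervalIntegrable (by rwa [Set.uIcc_of_le hab]))
        refine (ae_restrict_iff' measurableSet_Ioc).2 (Eventually.of_forall fun s hs ↦ ?_)
        exact (norm_nonneg _).trans (hgB s (Set.Ioc_subset_Icc_self hs))

theorem norm_sub_taylorWithinEval_le (hΩ : IsOpen Ω) (hf : ContDiffOn ℝ (d + 1 : ℕ) f Ω)
    (hI : Set.Icc a b ⊆ Ω) (hy : y ∈ Set.Icc a b) (hz : z ∈ Set.Icc a b) :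
    ‖f z - taylorWithinEval f d Ω y z‖ ≤
      (b - a) ^ d * ∫ s in a..b, ‖iteratedDerivWithin (d + 1) f Ω s‖ := by
  have hderiv : ∀ s ∈ Set.Icc a b, HasDerivAt (fun s ↦ taylorWithinEval f d Ω s z)
      (((d ! : ℝ)⁻¹ * (z - s) ^ d) • iteratedDerivWithin (d + 1) f Ω s) s := fun s hs ↦
    (hasDerivWithinAt_taylorWithinEval hΩ.uniqueDiffOn self_mem_nhdsWithin (hI hs) subset_rfl
      (hf.of_le (mod_cast d.le_succ))
      (hf.differentiableOn_iteratedDerivWithin (mod_cast d.lt_succ_self) hΩ.uniqueDiffOn s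
        (hI hs))).hasDerivAt (hΩ.mem_nhds (hI hs))
  have hcont : ContinuousOn (fun s ↦ (b - a) ^ d * ‖iteratedDerivWithin (d + 1) f Ω s‖)
      (Set.Icc a b) :=
    continuousOn_const.mul
      ((hf.continuousOn_iteratedDerivWithin le_rfl hΩ.uniqueDiffOn).mono hI).norm
  rw [← intervalIntegral.integral_const_mul]
  nth_rw 1 [← taylorWithinEval_self f d Ω z]
  refine norm_sub_le_integral_of_norm_deriv_le_of_mem_Icc hderiv hcont (fun s hs ↦ ?_) hy hz
  rw [norm_smul, norm_mul, norm_inv, norm_pow, Real.norm_natCast, Real.norm_eq_abs]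
  gcongr
  calc (d ! : ℝ)⁻¹ * |z - s| ^ d ≤ 1 * (b - a) ^ d := by
        gcongr
        · exact inv_le_one_of_one_le₀ (mod_cast d.factorial_pos)
        · exact abs_sub_le_iff.2 ⟨by linarith [hz.2, hs.1], by linarith [hs.2, hz.1]⟩
    _ = (b - a) ^ d := one_mul _

theorem norm_iteratedDerivWithin_mul_pow_le (hΩ : IsOpen Ω) (hf : ContDiffOn ℝ (d + 1 : ℕ) f Ω)
    (hI : Set.Icc a b ⊆ Ω) (hS : ∀ s ∈ Set.Icc a b, ‖f s‖ ≤ S) (hn : n ≤ d)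
    (hy : y ∈ Set.Icc a b) :
    ‖iteratedDerivWithin n f Ω y‖ * (b - a) ^ n ≤ derivInterpConst d n *
      (S + (b - a) ^ d * ∫ s in a..b, ‖iteratedDerivWithin (d + 1) f Ω s‖) := by
  obtain ⟨h, hstep, hnodes⟩ := exists_step_forall_add_mul_mem_Icc hy d
  set Q := S + (b - a) ^ d * ∫ s in a..b, ‖iteratedDerivWithin (d + 1) f Ω s‖
  set W := ∑ i, |finiteDiffWeight d n i|
  have htaylor (i : Fin (d + 1)) : ‖taylorWithinEval f d Ω y (y + i * h)‖ ≤ Q :=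
    calc ‖taylorWithinEval f d Ω y (y + i * h)‖
        ≤ ‖f (y + i * h)‖ + ‖f (y + i * h) - taylorWithinEval f d Ω y (y + i * h)‖ :=
          norm_le_norm_add_norm_sub _ _
      _ ≤ Q := add_le_add (hS _ (hnodes i))
          (norm_sub_taylorWithinEval_le hΩ hf hI hy (hnodes i))
  have hQ : 0 ≤ Q := (norm_nonneg _).trans (htaylor 0)
  have hstencil : (n ! : ℝ)⁻¹ * |h| ^ n * ‖iteratedDerivWithin n f Ω y‖ ≤ W * Q :=
    calc (n ! : ℝ)⁻¹ * |h| ^ n * ‖iteratedDerivWithin n f Ω y‖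
        = ‖∑ i, finiteDiffWeight d n i • taylorWithinEval f d Ω y (y + i * h)‖ := by
          rw [sum_finiteDiffWeight_smul_taylorWithinEval f Ω y h hn, norm_smul, norm_mul,
            norm_inv, norm_pow, Real.norm_natCast, Real.norm_eq_abs]
      _ ≤ ∑ i, |finiteDiffWeight d n i| * Q := by
          refine norm_sum_le_of_le _ fun i _ ↦ ?_
          rw [norm_smul, Real.norm_eq_abs]
          gcongr
          exact htaylor i
      _ = W * Q := (Finset.sum_mul ..).symm
  calc ‖iteratedDerivWithin n f Ω y‖ * (b - a) ^ n
      = n ! * (2 * (d + 1)) ^ n *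
          ((n ! : ℝ)⁻¹ * |h| ^ n * ‖iteratedDerivWithin n f Ω y‖) := by
        rw [← hstep, mul_pow]
        field_simp
    _ ≤ n ! * (2 * (d + 1)) ^ n * (W * Q) := by gcongr
    _ ≤ derivInterpConst d n * Q := by
        rw [derivInterpConst]
        linarith

theorem exists_radius_pow_mul_integral_eq {g : ℝ → ℝ} {R : ℝ}
    (hg : ContinuousOn g (Set.Icc (x - R) (x + R))) (hR : 0 ≤ R) (hS : 0 < S)
    (hSR : S ≤ (2 * R) ^ d * ∫ s in (x - R)..(x + R), g s) :
    ∃ r, 0 < r ∧ r ≤ R ∧ (2 * r) ^ d * ∫ s in (x - r)..(x + r), g s = S := by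
  have hxR : x - R ≤ x + R := by linarith
  have hprim : ContinuousOn (fun y ↦ ∫ s in (x - R)..y, g s) (Set.Icc (x - R) (x + R)) := by
    rw [← Set.uIcc_of_le hxR] at hg ⊢
    exact intervalIntegral.continuousOn_primitive_interval hg.integrableOn_uIcc
  have hleft : Set.MapsTo (fun r ↦ x - r) (Set.Icc 0 R) (Set.Icc (x - R) (x + R)) :=
    fun r hr ↦ ⟨by linarith [hr.2], by linarith [hr.1]⟩
  have hright : Set.MapsTo (fun r ↦ x + r) (Set.Icc 0 R) (Set.Icc (x - R) (x + R)) :=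
    fun r hr ↦ ⟨by linarith [hr.1], by linarith [hr.2]⟩
  have hint : ∀ y ∈ Set.Icc (x - R) (x + R), IntervalIntegrable g volume (x - R) y :=
    fun y hy ↦ (hg.mono (Set.uIcc_subset_Icc (Set.left_mem_Icc.2 hxR) hy)).intervalIntegrable
  have hcont : ContinuousOn (fun r ↦ (2 * r) ^ d * ∫ s in (x - r)..(x + r), g s)
      (Set.Icc 0 R) := by
    refine ContinuousOn.mul (by fun_prop) (((hprim.comp (by fun_prop) hright).sub
      (hprim.comp (by fun_prop) hleft)).congr fun r hr ↦ ?_)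
    exact (intervalIntegral.integral_interval_sub_left (hint _ (hright hr))
      (hint _ (hleft hr))).symm
  obtain ⟨r, hr, hrS⟩ := intermediate_value_Icc hR hcont ⟨by simpa using hS.le, hSR⟩
  refine ⟨r, hr.1.lt_of_ne' ?_, hr.2, hrS⟩
  rintro rfl
  simp [hS.ne] at hrS

theorem pos_of_forall_norm_le_of_derivWithin_ne_zero (hS : ∀ s ∈ Ω, ‖f s‖ ≤ S) (hx : x ∈ Ω)
    (hfx : derivWithin f Ω x ≠ 0) : 0 < S := by
  by_contra! hS_nonpos
  have hzero : Set.EqOn f (fun _ ↦ 0) Ω := fun s hs ↦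
    norm_le_zero_iff.1 ((hS s hs).trans hS_nonpos)
  exact hfx (by rw [derivWithin_congr hzero (hzero hx), derivWithin_fun_const, Pi.zero_apply])

theorem exists_balanced_radius (hΩ : IsOpen Ω) (hf : ContDiffOn ℝ (d + 1 : ℕ) f Ω) (hd : 1 ≤ d)
    (hS : ∀ s ∈ Ω, ‖f s‖ ≤ S) (hρ : 0 < ρ) (hball : Metric.ball x ρ ⊆ Ω)
    (hSt : 2 * derivInterpConst d 1 * S ≤ t * ρ) (htx : t < ‖derivWithin f Ω x‖) :
    ∃ r, 0 < r ∧ r ≤ ρ / 2 ∧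
      (2 * r) ^ d * ∫ s in (x - r)..(x + r), ‖iteratedDerivWithin (d + 1) f Ω s‖ = S ∧
      ∀ y ∈ Metric.closedBall x r, ‖derivWithin f Ω y‖ * r ≤ derivInterpConst d 1 * S := by
  set A := derivInterpConst d 1
  have hA : 0 < A := derivInterpConst_pos d 1
  have hx : x ∈ Ω := hball (Metric.mem_ball_self hρ)
  have ht : 0 ≤ t := by
    have hS_nonneg : 0 ≤ S := (norm_nonneg _).trans (hS x hx)
    exact nonneg_of_mul_nonneg_left (hSt.trans' (by positivity)) hρ
  have hS_pos : 0 < S :=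
    pos_of_forall_norm_le_of_derivWithin_ne_zero hS hx (norm_pos_iff.1 (ht.trans_lt htx))
  have hsub : ∀ r ≤ ρ / 2, Set.Icc (x - r) (x + r) ⊆ Ω := fun r hr ↦ by
    rw [← Real.closedBall_eq_Icc]
    exact (Metric.closedBall_subset_ball (by linarith)).trans hball
  have hinterp : ∀ r ≤ ρ / 2, ∀ y ∈ Set.Icc (x - r) (x + r), ‖derivWithin f Ω y‖ * (2 * r) ≤
      A * (S + (2 * r) ^ d *
        ∫ s in (x - r)..(x + r), ‖iteratedDerivWithin (d + 1) f Ω s‖) := fun r hr y hy ↦ by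
    have hlen : x + r - (x - r) = 2 * r := by ring
    simpa only [hlen, iteratedDerivWithin_one, pow_one] using
      norm_iteratedDerivWithin_mul_pow_le hΩ hf (hsub r hr) (fun s hs ↦ hS s (hsub r hr hs)) hd hy
  obtain ⟨r, hr, hrρ, hrS⟩ := exists_radius_pow_mul_integral_eq (d := d) (S := S)
    ((hf.continuousOn_iteratedDerivWithin le_rfl hΩ.uniqueDiffOn).norm.mono (hsub _ le_rfl))
    (half_pos hρ).le hS_pos (by
      by_contra! hlt
      have hx_bound := hinterp (ρ / 2) le_rfl x ⟨by linarith, by linarith⟩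
      have htx_mul := mul_lt_mul_of_pos_right htx hρ
      have hA_mul := mul_lt_mul_of_pos_left hlt hA
      linarith)
  refine ⟨r, hr, hrρ, hrS, fun y hy ↦ ?_⟩
  have hy_bound := hinterp r hrρ y (by rwa [← Real.closedBall_eq_Icc])
  rw [hrS] at hy_bound
  linarith

end Interpolation

section LIntegral

variable {α : Type*} [MeasurableSpace α] {μ : Measure α}

theorem mul_measure_univ_le_lintegral_ofReal_sub [IsFiniteMeasure μ] {g : α → ℝ} {c : ℝ}
    {a : ℝ≥0∞} (ha : a ≠ ∞) (hc : ENNReal.ofReal c ≤ a)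
    (h : 2 * a * μ Set.univ ≤ ∫⁻ y, ENNReal.ofReal (g y) ∂μ) :
    a * μ Set.univ ≤ ∫⁻ y, ENNReal.ofReal (g y - c) ∂μ := by
  have ha_fin : a * μ Set.univ ≠ ∞ := ENNReal.mul_ne_top ha (measure_ne_top μ _)
  refine (ENNReal.add_le_add_iff_right ha_fin).1 ?_
  calc a * μ Set.univ + a * μ Set.univ = 2 * a * μ Set.univ := by ring
    _ ≤ ∫⁻ y, ENNReal.ofReal (g y) ∂μ := h
    _ ≤ ∫⁻ y, (ENNReal.ofReal (g y - c) + a) ∂μ := by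
        refine lintegral_mono fun y ↦ ?_
        calc ENNReal.ofReal (g y) = ENNReal.ofReal (g y - c + c) := by rw [sub_add_cancel]
          _ ≤ ENNReal.ofReal (g y - c) + ENNReal.ofReal c := ENNReal.ofReal_add_le
          _ ≤ ENNReal.ofReal (g y - c) + a := by gcongr
    _ = ∫⁻ y, ENNReal.ofReal (g y - c) ∂μ + a * μ Set.univ := by
        rw [lintegral_add_right _ measurable_const, lintegral_const]

theorem rpow_mul_measure_univ_le_lintegral_rpow [IsFiniteMeasure μ] {w : α → ℝ≥0∞} {a : ℝ≥0∞}
    {p : ℝ} (hp : 1 ≤ p) (hw : AEMeasurable w μ) (h : a * μ Set.univ ≤ ∫⁻ y, w y ∂μ) :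
    a ^ p * μ Set.univ ≤ ∫⁻ y, w y ^ p ∂μ := by
  rcases eq_or_ne (μ Set.univ) 0 with hμ | hμ
  · simp [hμ]
  have hp0 : 0 < p := one_pos.trans_le hp
  have hholder : ∫⁻ y, w y ∂μ ≤ (∫⁻ y, w y ^ p ∂μ) ^ (1 / p) * μ Set.univ ^ (1 - 1 / p) := by
    simpa [eLpNorm'] using
      eLpNorm'_le_eLpNorm'_mul_rpow_measure_univ one_pos hp hw.aestronglyMeasurable
  have hcancel (q : ℝ) : μ Set.univ ^ q * μ Set.univ ^ (1 - q) = μ Set.univ := by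
    rw [← ENNReal.rpow_add _ _ hμ (measure_ne_top μ _), add_sub_cancel, ENNReal.rpow_one]
  calc a ^ p * μ Set.univ = (a * μ Set.univ) ^ p * μ Set.univ ^ (1 - p) := by
        rw [ENNReal.mul_rpow_of_nonneg _ _ hp0.le, mul_assoc, hcancel]
    _ ≤ ((∫⁻ y, w y ^ p ∂μ) ^ (1 / p) * μ Set.univ ^ (1 - 1 / p)) ^ p *
          μ Set.univ ^ (1 - p) := by
        gcongr ?_ ^ p * _
        exact h.trans hholder
    _ = ∫⁻ y, w y ^ p ∂μ := by
        rw [ENNReal.mul_rpow_of_nonneg _ _ hp0.le, ← ENNReal.rpow_mul, ← ENNReal.rpow_mul,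
          one_div_mul_cancel hp0.ne', ENNReal.rpow_one, mul_assoc,
          ← ENNReal.rpow_add _ _ hμ (measure_ne_top μ _)]
        have hexp : (1 - 1 / p) * p + (1 - p) = 0 := by field_simp; ring
        rw [hexp, ENNReal.rpow_zero, mul_one]

theorem lintegral_rpow_le_lintegral_ofReal_sub_rpow [IsFiniteMeasure μ] {v : α → ℝ≥0∞}
    {g : α → ℝ} {c p : ℝ} {a : ℝ≥0∞} (hp : 1 ≤ p) (hg : AEMeasurable g μ) (ha : a ≠ ∞)
    (hc : ENNReal.ofReal c ≤ a) (hv : ∀ᵐ y ∂μ, v y ≤ a)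
    (h : 2 * a * μ Set.univ ≤ ∫⁻ y, ENNReal.ofReal (g y) ∂μ) :
    ∫⁻ y, v y ^ p ∂μ ≤ ∫⁻ y, ENNReal.ofReal (g y - c) ^ p ∂μ :=
  calc ∫⁻ y, v y ^ p ∂μ ≤ ∫⁻ _, a ^ p ∂μ :=
        lintegral_mono_ae (hv.mono fun _ hy ↦ ENNReal.rpow_le_rpow hy (zero_le_one.trans hp))
    _ = a ^ p * μ Set.univ := lintegral_const _
    _ ≤ ∫⁻ y, ENNReal.ofReal (g y - c) ^ p ∂μ :=
        rpow_mul_measure_univ_le_lintegral_rpow hp (hg.sub_const c).ennreal_ofReal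
          (mul_measure_univ_le_lintegral_ofReal_sub ha hc h)

theorem measure_le_mul_of_forall_closedBall_le {X : Type*} [MetricSpace X]
    [SecondCountableTopology X] [MeasurableSpace X] [OpensMeasurableSpace X] {N : ℕ} {τ : ℝ}
    (hτ : 1 < τ) (hN : IsEmpty (Besicovitch.SatelliteConfig X N τ)) {μ ν : Measure X}
    {s U : Set X} {R : ℝ}
    (h : ∀ x ∈ s, ∃ r, 0 < r ∧ r ≤ R ∧ Metric.closedBall x r ⊆ U ∧
      μ (Metric.closedBall x r) ≤ ν (Metric.closedBall x r)) :
    μ s ≤ N * ν U := by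
  choose! r hr hrR hrU hμν using h
  obtain ⟨T, hT, hcov⟩ := Besicovitch.exist_disjoint_covering_families hτ hN
    (⟨fun x : s ↦ (x : X), fun x ↦ r x, fun x ↦ hr x x.2, R, fun x ↦ hrR x x.2⟩ :
      Besicovitch.BallPackage s X)
  have hT_countable (i : Fin N) : (T i).Countable :=
    (hT i).countable_of_nonempty_interior fun x _ ↦
      ⟨x, Metric.ball_subset_interior_closedBall (Metric.mem_ball_self (hr x x.2))⟩
  have hfamily (i : Fin N) : μ (⋃ x ∈ T i, Metric.closedBall (x : X) (r x)) ≤ ν U :=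
    calc μ (⋃ x ∈ T i, Metric.closedBall (x : X) (r x))
        ≤ ∑' x : T i, μ (Metric.closedBall (x : X) (r x)) :=
          measure_biUnion_le μ (hT_countable i) _
      _ ≤ ∑' x : T i, ν (Metric.closedBall (x : X) (r x)) :=
          ENNReal.tsum_le_tsum fun x ↦ hμν x x.1.2
      _ = ν (⋃ x ∈ T i, Metric.closedBall (x : X) (r x)) :=
          (measure_biUnion (hT_countable i) (hT i) fun _ _ ↦ measurableSet_closedBall).symm
      _ ≤ ν U := measure_mono (Set.iUnion₂_subset fun x _ ↦ hrU x x.2)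
  calc μ s ≤ μ (⋃ i, ⋃ x ∈ T i, Metric.closedBall (x : X) (r x)) := by
        refine measure_mono ((Subtype.range_coe.symm.subset.trans hcov).trans ?_)
        exact Set.iUnion_mono fun i ↦ Set.iUnion₂_mono fun x _ ↦ Metric.ball_subset_closedBall
    _ ≤ ∑' i, μ (⋃ x ∈ T i, Metric.closedBall (x : X) (r x)) := measure_iUnion_le _
    _ ≤ ∑' _ : Fin N, ν U := ENNReal.tsum_le_tsum hfamily
    _ = N * ν U := by simp

end LIntegral

section OneDimensional

variable {F : Type*} [NormedAddCommGroup F] [NormedSpace ℝ F] {f : ℝ → F} {Ω : Set ℝ}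
  {x S t ρ p : ℝ} {d : ℕ}

/-- The admissible value of `κ` in the one-dimensional truncated inequality of order `d + 1`. The
leading factor `2` leaves half of the mean of the highest derivative after truncation. -/
noncomputable def truncThreshold (d : ℕ) : ℝ := (2 * (2 * derivInterpConst d 1) ^ (d + 1))⁻¹

theorem truncThreshold_pos (d : ℕ) : 0 < truncThreshold d := by
  have := derivInterpConst_pos d 1
  unfold truncThreshold
  positivity

theorem two_mul_truncThreshold_mul_pow (d : ℕ) (s : ℝ) :
    2 * truncThreshold d * (2 * derivInterpConst d 1 * s) ^ (d + 1) = s ^ (d + 1) := by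
  have := (derivInterpConst_pos d 1).ne'
  rw [truncThreshold, mul_pow _ s]
  field_simp

theorem two_mul_derivInterpConst_mul_le (ht : 0 < t) (hρ : 0 < ρ)
    (hS : S ^ (d + 1) ≤ truncThreshold d * t ^ (d + 1) * ρ ^ (d + 1)) :
    2 * derivInterpConst d 1 * S ≤ t * ρ := by
  have hκ := truncThreshold_pos d
  refine le_of_pow_le_pow_left₀ d.succ_ne_zero (by positivity) ?_
  refine le_of_mul_le_mul_left ?_ (mul_pos two_pos hκ)
  calc 2 * truncThreshold d * (2 * derivInterpConst d 1 * S) ^ (d + 1) = S ^ (d + 1) :=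
        two_mul_truncThreshold_mul_pow d S
    _ ≤ truncThreshold d * t ^ (d + 1) * ρ ^ (d + 1) := hS
    _ = truncThreshold d * (t * ρ) ^ (d + 1) := by ring
    _ ≤ 2 * truncThreshold d * (t * ρ) ^ (d + 1) := by
        gcongr
        linarith

theorem two_mul_truncThreshold_mul_div_pow {r P : ℝ} (hr : r ≠ 0) (hP : (2 * r) ^ d * P = S) :
    2 * (truncThreshold d * (derivInterpConst d 1 * S / r) ^ (d + 1)) * (2 * r) = S ^ d * P := by
  have hscale : derivInterpConst d 1 * S / r = 2 * derivInterpConst d 1 * (S / (2 * r)) := by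
    field_simp
  rw [hscale, ← mul_assoc 2 (truncThreshold d), two_mul_truncThreshold_mul_pow, div_pow,
    pow_succ S, pow_succ (2 * r)]
  nth_rw 2 [← hP]
  field_simp

theorem lintegral_closedBall_ofReal_mul {g : ℝ → ℝ} {r c : ℝ} (hr : 0 ≤ r) (hc : 0 ≤ c)
    (hg : ContinuousOn g (Metric.closedBall x r)) (hg_nonneg : ∀ y, 0 ≤ g y) :
    ∫⁻ y in Metric.closedBall x r, ENNReal.ofReal (c * g y) =
      ENNReal.ofReal (c * ∫ y in (x - r)..(x + r), g y) := by
  rw [Real.closedBall_eq_Icc] at hg ⊢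
  rw [intervalIntegral.integral_of_le (by linarith), ← integral_Icc_eq_integral_Ioc,
    ← integral_const_mul, ofReal_integral_eq_lintegral_ofReal (hg.integrableOn_Icc.const_mul c)
      (Eventually.of_forall fun y ↦ mul_nonneg hc (hg_nonneg y))]

theorem exists_closedBall_lintegral_rpow_le (hΩ : IsOpen Ω) (hf : ContDiffOn ℝ (d + 1 : ℕ) f Ω)
    (hd : 1 ≤ d) (hp : 1 ≤ p) (hS : ∀ s ∈ Ω, ‖f s‖ ≤ S) (ht : 0 < t) (hρ : 0 < ρ)
    (hSt : S ^ (d + 1) ≤ truncThreshold d * t ^ (d + 1) * ρ ^ (d + 1))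
    (hball : Metric.ball x ρ ⊆ Ω) (htx : t < ‖derivWithin f Ω x‖) :
    ∃ r, 0 < r ∧ r ≤ ρ / 2 ∧
      ∫⁻ y in Metric.closedBall x r,
          ENNReal.ofReal (truncThreshold d * ‖derivWithin f Ω y‖ ^ (d + 1)) ^ p ≤
        ∫⁻ y in Metric.closedBall x r, ENNReal.ofReal
          (S ^ d * ‖iteratedDerivWithin (d + 1) f Ω y‖ - truncThreshold d * t ^ (d + 1)) ^ p := by
  obtain ⟨r, hr, hrρ, hrS, hbound⟩ := exists_balanced_radius hΩ hf hd hS hρ hball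
    (two_mul_derivInterpConst_mul_le ht hρ hSt) htx
  have hκ := truncThreshold_pos d
  have hx : x ∈ Metric.closedBall x r := Metric.mem_closedBall_self hr.le
  have hsub : Metric.closedBall x r ⊆ Ω :=
    (Metric.closedBall_subset_ball (by linarith)).trans hball
  have hS_nonneg : 0 ≤ S := (norm_nonneg _).trans (hS x (hsub hx))
  have hD : ContinuousOn (iteratedDerivWithin (d + 1) f Ω) (Metric.closedBall x r) :=
    (hf.continuousOn_iteratedDerivWithin le_rfl hΩ.uniqueDiffOn).mono hsub
  have hderiv_le : ∀ y ∈ Metric.closedBall x r,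
      ‖derivWithin f Ω y‖ ≤ derivInterpConst d 1 * S / r :=
    fun y hy ↦ (le_div_iff₀ hr).2 (hbound y hy)
  have := isFiniteMeasure_restrict.2 (measure_closedBall_lt_top (μ := volume) (x := x) (r := r)).ne
  refine ⟨r, hr, hrρ, lintegral_rpow_le_lintegral_ofReal_sub_rpow hp
    (a := ENNReal.ofReal (truncThreshold d * (derivInterpConst d 1 * S / r) ^ (d + 1)))
    ((continuousOn_const.mul hD.norm).aemeasurable measurableSet_closedBall) ofReal_ne_top
    (by gcongr; exact htx.le.trans (hderiv_le x hx)) ?_ ?_⟩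
  · refine (ae_restrict_iff' measurableSet_closedBall).2 (Eventually.of_forall fun y hy ↦ ?_)
    gcongr
    exact hderiv_le y hy
  · rw [lintegral_closedBall_ofReal_mul hr.le (by positivity) hD.norm fun _ ↦ norm_nonneg _,
      Measure.restrict_apply_univ, Real.volume_closedBall, ← ENNReal.ofReal_ofNat 2,
      ← ENNReal.ofReal_mul two_pos.le, ← ENNReal.ofReal_mul' (by positivity),
      two_mul_truncThreshold_mul_div_pow hr.ne' hrS]

theorem lintegral_derivWithin_rpow_le (hΩ : IsOpen Ω) (hf : ContDiffOn ℝ (d + 1 : ℕ) f Ω)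
    (hd : 1 ≤ d) (hp : 1 ≤ p) (hS : ∀ s ∈ Ω, ‖f s‖ ≤ S) (ht : 0 < t) (hρ : 0 < ρ)
    (hSt : S ^ (d + 1) ≤ truncThreshold d * t ^ (d + 1) * ρ ^ (d + 1)) {N : ℕ} {τ : ℝ}
    (hτ : 1 < τ) (hN : IsEmpty (Besicovitch.SatelliteConfig ℝ N τ)) :
    ∫⁻ x in {x | Metric.ball x ρ ⊆ Ω ∧ t < ‖derivWithin f Ω x‖},
        ENNReal.ofReal (truncThreshold d * ‖derivWithin f Ω x‖ ^ (d + 1)) ^ p ≤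
      N * ∫⁻ x in Ω, ENNReal.ofReal
        (S ^ d * ‖iteratedDerivWithin (d + 1) f Ω x‖ - truncThreshold d * t ^ (d + 1)) ^ p := by
  simp_rw [← withDensity_apply']
  refine measure_le_mul_of_forall_closedBall_le hτ hN (R := ρ / 2) fun x hx ↦ ?_
  obtain ⟨r, hr, hrρ, hle⟩ :=
    exists_closedBall_lintegral_rpow_le hΩ hf hd hp hS ht hρ hSt hx.1 hx.2
  refine ⟨r, hr, hrρ, (Metric.closedBall_subset_ball (by linarith)).trans hx.1, ?_⟩
  simpa only [withDensity_apply'] using hle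

end OneDimensional

section Lines

variable {E : Type*} [NormedAddCommGroup E] [NormedSpace ℝ E] {v : E}

section Fubini

variable [SecondCountableTopology E] [MeasurableSpace E] [BorelSpace E] {μ : Measure E} [SFinite μ]
  [μ.IsAddRightInvariant]

-- Every line in direction `v` meets the slab `0 ≤ ℓ < 1` in a segment of parameter length one.
theorem setLIntegral_lintegral_line {ℓ : E →L[ℝ] ℝ} (hℓ : ℓ v = 1) {f : E → ℝ≥0∞}
    (hf : Measurable f) :
    ∫⁻ a in ℓ ⁻¹' Set.Ico 0 1, (∫⁻ s : ℝ, f (a + s • v)) ∂μ = ∫⁻ a, f a ∂μ := by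
  classical
  set A := ℓ ⁻¹' Set.Ico 0 1
  have hA : MeasurableSet A := ℓ.measurable measurableSet_Ico
  have hvol (a : E) : ∫⁻ s : ℝ, A.indicator 1 (a - s • v) = 1 :=
    calc ∫⁻ s : ℝ, A.indicator 1 (a - s • v)
        = ∫⁻ s : ℝ, (Set.Ico (0 : ℝ) 1).indicator 1 (ℓ a - s) := by
          simp only [A, Set.indicator_apply, Set.mem_preimage, map_sub, map_smul, hℓ,
            smul_eq_mul, mul_one, Pi.one_apply]
      _ = ∫⁻ s : ℝ, (Set.Ico (0 : ℝ) 1).indicator 1 s := lintegral_sub_left_eq_self _ _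
      _ = 1 := by simp
  calc ∫⁻ a in A, (∫⁻ s : ℝ, f (a + s • v)) ∂μ
      = ∫⁻ s : ℝ, ∫⁻ a in A, f (a + s • v) ∂μ := lintegral_lintegral_swap (by fun_prop)
    _ = ∫⁻ s : ℝ, ∫⁻ a, A.indicator 1 (a - s • v) * f a ∂μ := by
        congr! 2 with s
        rw [← lintegral_indicator hA,
          ← lintegral_add_right_eq_self (fun a ↦ A.indicator 1 (a - s • v) * f a) (s • v)]
        simp only [add_sub_cancel_right, Set.indicator_apply, Pi.one_apply, ite_mul, one_mul,
          zero_mul]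
    _ = ∫⁻ a, (∫⁻ s : ℝ, A.indicator 1 (a - s • v) * f a) ∂μ := by
        refine lintegral_lintegral_swap (Measurable.aemeasurable ?_)
        exact ((measurable_one.indicator hA).comp (by fun_prop)).mul (by fun_prop)
    _ = ∫⁻ a, f a ∂μ := by
        congr! 2 with a
        have hmeas : Measurable fun s : ℝ ↦ A.indicator (1 : E → ℝ≥0∞) (a - s • v) :=
          (measurable_one.indicator hA).comp (by fun_prop)
        rw [lintegral_mul_const _ hmeas, hvol, one_mul]

theorem setLIntegral_setLIntegral_line {ℓ : E →L[ℝ] ℝ} (hℓ : ℓ v = 1) {U : Set E}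
    (hU : MeasurableSet U) {f : E → ℝ≥0∞} (hf : ContinuousOn f U) :
    ∫⁻ a in ℓ ⁻¹' Set.Ico 0 1,
        (∫⁻ s in (fun s : ℝ ↦ a + s • v) ⁻¹' U, f (a + s • v)) ∂μ = ∫⁻ x in U, f x ∂μ := by
  classical
  have hf_ind : Measurable (U.indicator f) := by
    rw [← Set.piecewise_eq_indicator]
    exact hf.measurable_piecewise continuousOn_const hU
  rw [← lintegral_indicator hU, ← setLIntegral_lintegral_line hℓ hf_ind]
  congr! 2 with a
  have hline : Measurable fun s : ℝ ↦ a + s • v := by fun_prop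
  rw [← lintegral_indicator (hline hU)]
  rfl

theorem setLIntegral_le_mul_of_forall_line (hv : v ≠ 0) {T U : Set E} (hT : MeasurableSet T)
    (hU : MeasurableSet U) {f g : E → ℝ≥0∞} (hf : ContinuousOn f T) (hg : ContinuousOn g U)
    {c : ℝ≥0∞} (hc : c ≠ ∞)
    (h : ∀ a : E, ∫⁻ s in (fun s : ℝ ↦ a + s • v) ⁻¹' T, f (a + s • v) ≤
      c * ∫⁻ s in (fun s : ℝ ↦ a + s • v) ⁻¹' U, g (a + s • v)) :
    ∫⁻ x in T, f x ∂μ ≤ c * ∫⁻ x in U, g x ∂μ := by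
  obtain ⟨ℓ, hℓ⟩ := SeparatingDual.exists_eq_one (R := ℝ) hv
  rw [← setLIntegral_setLIntegral_line hℓ hT hf, ← setLIntegral_setLIntegral_line hℓ hU hg,
    ← lintegral_const_mul' _ _ hc]
  exact lintegral_mono h

end Fubini

variable {F : Type*} [NormedAddCommGroup F] [NormedSpace ℝ F] {u : E → F} {Ω : Set E}

theorem iteratedDerivWithin_comp_line {n : ℕ} (hΩ : IsOpen Ω) (hu : ContDiffOn ℝ n u Ω) (a v : E)
    {s : ℝ} (hs : a + s • v ∈ Ω) :
    iteratedDerivWithin n (fun s : ℝ ↦ u (a + s • v)) ((fun s : ℝ ↦ a + s • v) ⁻¹' Ω) s =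
      iteratedFDerivWithin ℝ n u Ω (a + s • v) fun _ ↦ v := by
  have hcont : Continuous fun z ↦ a + z := by fun_prop
  have hΩa : IsOpen ((fun z ↦ a + z) ⁻¹' Ω) := hΩ.preimage hcont
  have hua : ContDiffOn ℝ n (fun z ↦ u (a + z)) ((fun z ↦ a + z) ⁻¹' Ω) :=
    hu.comp (by fun_prop) (Set.mapsTo_preimage _ _)
  let L := ContinuousLinearMap.toSpanSingleton ℝ v
  rw [iteratedDerivWithin_eq_iteratedFDerivWithin]
  refine (DFunLike.congr_fun (L.iteratedFDerivWithin_comp_right hua hΩa.uniqueDiffOn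
    (hΩa.preimage L.continuous).uniqueDiffOn hs le_rfl) _).trans ?_
  rw [iteratedFDerivWithin_comp_add_left, ← Set.image_vadd]
  simp only [vadd_eq_add, Set.image_preimage_eq _ (add_left_surjective a)]
  simp [L]

theorem derivWithin_comp_line (hΩ : IsOpen Ω) (hu : DifferentiableOn ℝ u Ω) (a v : E)
    {s : ℝ} (hs : a + s • v ∈ Ω) :
    derivWithin (fun s : ℝ ↦ u (a + s • v)) ((fun s : ℝ ↦ a + s • v) ⁻¹' Ω) s =
      fderivWithin ℝ u Ω (a + s • v) v := by
  have hline : HasDerivAt (fun s : ℝ ↦ a + s • v) v s := by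
    simpa using ((hasDerivAt_id s).smul_const v).const_add a
  have hopen : IsOpen ((fun s : ℝ ↦ a + s • v) ⁻¹' Ω) := hΩ.preimage (by fun_prop)
  exact ((hu _ hs).hasFDerivWithinAt.comp_hasDerivWithinAt s hline.hasDerivWithinAt
    (Set.mapsTo_preimage _ _)).derivWithin (hopen.uniqueDiffOn s hs)

theorem norm_iteratedDerivWithin_comp_line_le {n : ℕ} (hΩ : IsOpen Ω) (hu : ContDiffOn ℝ n u Ω)
    (hv : ‖v‖ ≤ 1) {a : E} {s : ℝ} (hs : a + s • v ∈ Ω) :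
    ‖iteratedDerivWithin n (fun s : ℝ ↦ u (a + s • v)) ((fun s : ℝ ↦ a + s • v) ⁻¹' Ω) s‖ ≤
      ‖iteratedFDerivWithin ℝ n u Ω (a + s • v)‖ := by
  rw [iteratedDerivWithin_comp_line hΩ hu a v hs]
  exact ContinuousMultilinearMap.unit_le_opNorm _
    ((pi_norm_le_iff_of_nonneg zero_le_one).2 fun _ ↦ hv)

theorem ball_subset_preimage_line {ρ s : ℝ} {a : E} (hv : ‖v‖ ≤ 1)
    (h : Metric.ball (a + s • v) ρ ⊆ Ω) :
    Metric.ball s ρ ⊆ (fun s : ℝ ↦ a + s • v) ⁻¹' Ω := by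
  refine fun s' hs' ↦ h ?_
  rw [Metric.mem_ball, dist_add_left, dist_eq_norm, ← sub_smul, norm_smul]
  exact (mul_le_of_le_one_right (norm_nonneg _) hv).trans_lt hs'

end Lines

section BallSubset

variable {X : Type*} [PseudoMetricSpace X] {Ω : Set X} {ρ : ℝ}

theorem isClosed_setOf_ball_subset (Ω : Set X) (ρ : ℝ) :
    IsClosed {x | Metric.ball x ρ ⊆ Ω} := by
  have hcompl : {x | Metric.ball x ρ ⊆ Ω} = (Metric.thickening ρ Ωᶜ)ᶜ := by
    ext x
    simp only [Set.mem_ofPred_eq, Set.mem_compl_iff, Metric.mem_thickening_iff, not_exists,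
      not_and, Set.subset_def, Metric.mem_ball']
    exact forall_congr' fun y ↦ not_imp_not.symm
  rw [hcompl]
  exact Metric.isOpen_thickening.isClosed_compl

theorem setOf_ball_subset_subset (Ω : Set X) (hρ : 0 < ρ) : {x | Metric.ball x ρ ⊆ Ω} ⊆ Ω :=
  fun _ hx ↦ hx (Metric.mem_ball_self hρ)

theorem measurableSet_ball_subset_and_lt [MeasurableSpace X] [OpensMeasurableSpace X]
    (hΩ : IsOpen Ω) (hρ : 0 < ρ) {g : X → ℝ} (hg : ContinuousOn g Ω) (t : ℝ) :
    MeasurableSet {x | Metric.ball x ρ ⊆ Ω ∧ t < g x} := by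
  have hinter : {x | Metric.ball x ρ ⊆ Ω ∧ t < g x} =
      {x | Metric.ball x ρ ⊆ Ω} ∩ (Ω ∩ g ⁻¹' Set.Ioi t) := by
    ext x
    exact ⟨fun hx ↦ ⟨hx.1, setOf_ball_subset_subset Ω hρ hx.1, hx.2⟩, fun hx ↦ ⟨hx.1, hx.2.2⟩⟩
  rw [hinter]
  exact (isClosed_setOf_ball_subset Ω ρ).measurableSet.inter
    (hg.isOpen_inter_preimage hΩ isOpen_Ioi).measurableSet

end BallSubset

universe w

theorem exists_unitVectors_opNorm_le (E : Type*) [NormedAddCommGroup E] [NormedSpace ℝ E]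
    [FiniteDimensional ℝ E] :
    ∃ (n : ℕ) (e : Fin n → E) (M : ℝ), 0 < M ∧ (∀ i, ‖e i‖ = 1) ∧
      ∀ (F : Type w) [NormedAddCommGroup F] [NormedSpace ℝ F] (L : E →L[ℝ] F), L ≠ 0 →
        ∃ i, ‖L‖ ≤ M * ‖L (e i)‖ := by
  let b := Module.finBasis ℝ E
  let e := b.isUnitSMul fun i ↦ (inv_ne_zero (norm_ne_zero_iff.2 (b.ne_zero i))).isUnit
  refine ⟨_, e, 1 + Fintype.card (Fin (Module.finrank ℝ E)) •
    ‖e.equivFunL.toContinuousLinearMap‖, by positivity, fun i ↦ ?_, fun F _ _ L hL ↦ ?_⟩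
  · rw [Module.Basis.isUnitSMul_apply, norm_smul, norm_inv, norm_norm,
      inv_mul_cancel₀ (norm_ne_zero_iff.2 (b.ne_zero i))]
  · have hι : Nonempty (Fin (Module.finrank ℝ E)) := by
      by_contra! hempty
      exact hL (ContinuousLinearMap.coe_injective (b.ext isEmptyElim))
    obtain ⟨i, hi⟩ := Finite.exists_max fun i ↦ ‖L (e i)‖
    refine ⟨i, (e.opNorm_le (norm_nonneg _) hi).trans ?_⟩
    gcongr
    exact le_add_of_nonneg_left zero_le_one

section Truncated

variable {E F : Type*} [NormedAddCommGroup E] [NormedSpace ℝ E] [NormedAddCommGroup F]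
  [NormedSpace ℝ F] {u : E → F} {Ω : Set E} {v : E} {S t ρ p : ℝ} {d : ℕ}

theorem lintegral_line_fderivWithin_apply_rpow_le (hΩ : IsOpen Ω)
    (hu : ContDiffOn ℝ (d + 1 : ℕ) u Ω) (hd : 1 ≤ d) (hp : 1 ≤ p) (hv : ‖v‖ ≤ 1)
    (hS : ∀ x ∈ Ω, ‖u x‖ ≤ S) (ht : 0 < t) (hρ : 0 < ρ)
    (hSt : S ^ (d + 1) ≤ truncThreshold d * t ^ (d + 1) * ρ ^ (d + 1)) {N : ℕ} {τ : ℝ}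
    (hτ : 1 < τ) (hN : IsEmpty (Besicovitch.SatelliteConfig ℝ N τ)) (a : E) :
    ∫⁻ s in (fun s : ℝ ↦ a + s • v) ⁻¹'
          {x | Metric.ball x ρ ⊆ Ω ∧ t < ‖fderivWithin ℝ u Ω x v‖},
        ENNReal.ofReal (truncThreshold d * ‖fderivWithin ℝ u Ω (a + s • v) v‖ ^ (d + 1)) ^ p ≤
      N * ∫⁻ s in (fun s : ℝ ↦ a + s • v) ⁻¹' Ω,
        ENNReal.ofReal (S ^ d * ‖iteratedFDerivWithin ℝ (d + 1) u Ω (a + s • v)‖ -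
          truncThreshold d * t ^ (d + 1)) ^ p := by
  set line := fun s : ℝ ↦ a + s • v
  set T := {s | Metric.ball s ρ ⊆ line ⁻¹' Ω ∧ t < ‖derivWithin (u ∘ line) (line ⁻¹' Ω) s‖}
  have hΩ_line : IsOpen (line ⁻¹' Ω) := hΩ.preimage (by fun_prop)
  have hu_line : ContDiffOn ℝ (d + 1 : ℕ) (u ∘ line) (line ⁻¹' Ω) :=
    hu.comp (by fun_prop) (Set.mapsTo_preimage _ _)
  have hderiv {s : ℝ} (hs : line s ∈ Ω) :
      derivWithin (u ∘ line) (line ⁻¹' Ω) s = fderivWithin ℝ u Ω (line s) v :=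
    derivWithin_comp_line hΩ (hu.differentiableOn (by simp)) a v hs
  have hT_subset : line ⁻¹' {x | Metric.ball x ρ ⊆ Ω ∧ t < ‖fderivWithin ℝ u Ω x v‖} ⊆ T :=
    fun s hs ↦ ⟨ball_subset_preimage_line hv hs.1,
      by rw [hderiv (setOf_ball_subset_subset Ω hρ hs.1)]; exact hs.2⟩
  have hT : MeasurableSet T := measurableSet_ball_subset_and_lt hΩ_line hρ
    (hu_line.continuousOn_derivWithin hΩ_line.uniqueDiffOn (by simp)).norm t
  calc _ ≤ ∫⁻ s in T,
          ENNReal.ofReal (truncThreshold d * ‖fderivWithin ℝ u Ω (line s) v‖ ^ (d + 1)) ^ p :=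
        lintegral_mono_set hT_subset
    _ = ∫⁻ s in T, ENNReal.ofReal
          (truncThreshold d * ‖derivWithin (u ∘ line) (line ⁻¹' Ω) s‖ ^ (d + 1)) ^ p :=
        setLIntegral_congr_fun hT fun s hs ↦ by
          simp only [hderiv (setOf_ball_subset_subset (line ⁻¹' Ω) hρ hs.1)]
    _ ≤ N * ∫⁻ s in line ⁻¹' Ω, ENNReal.ofReal
          (S ^ d * ‖iteratedDerivWithin (d + 1) (u ∘ line) (line ⁻¹' Ω) s‖ -
            truncThreshold d * t ^ (d + 1)) ^ p :=
        lintegral_derivWithin_rpow_le hΩ_line hu_line hd hp (fun s hs ↦ hS _ hs) ht hρ hSt hτ hN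
    _ ≤ _ := by
        gcongr N * ?_
        refine setLIntegral_mono' hΩ_line.measurableSet fun s hs ↦ ?_
        have hS_nonneg : 0 ≤ S := (norm_nonneg _).trans (hS _ hs)
        gcongr
        exact norm_iteratedDerivWithin_comp_line_le hΩ hu hv hs

theorem lintegral_fderivWithin_apply_rpow_le [SecondCountableTopology E] [MeasurableSpace E]
    [BorelSpace E] {μ : Measure E} [SFinite μ] [μ.IsAddRightInvariant] (hΩ : IsOpen Ω)
    (hu : ContDiffOn ℝ (d + 1 : ℕ) u Ω) (hd : 1 ≤ d) (hp : 1 ≤ p) (hv : ‖v‖ = 1)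
    (hS : ∀ x ∈ Ω, ‖u x‖ ≤ S) (ht : 0 < t) (hρ : 0 < ρ)
    (hSt : S ^ (d + 1) ≤ truncThreshold d * t ^ (d + 1) * ρ ^ (d + 1)) {N : ℕ} {τ : ℝ}
    (hτ : 1 < τ) (hN : IsEmpty (Besicovitch.SatelliteConfig ℝ N τ)) :
    ∫⁻ x in {x | Metric.ball x ρ ⊆ Ω ∧ t < ‖fderivWithin ℝ u Ω x v‖},
        ENNReal.ofReal (truncThreshold d * ‖fderivWithin ℝ u Ω x v‖ ^ (d + 1)) ^ p ∂μ ≤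
      N * ∫⁻ x in Ω, ENNReal.ofReal (S ^ d * ‖iteratedFDerivWithin ℝ (d + 1) u Ω x‖ -
        truncThreshold d * t ^ (d + 1)) ^ p ∂μ := by
  have hD : ContinuousOn (fun x ↦ fderivWithin ℝ u Ω x v) Ω :=
    (hu.continuousOn_fderivWithin hΩ.uniqueDiffOn (by simp)).clm_apply continuousOn_const
  have hDk : ContinuousOn (iteratedFDerivWithin ℝ (d + 1) u Ω) Ω :=
    hu.continuousOn_iteratedFDerivWithin le_rfl hΩ.uniqueDiffOn
  have hcont {g : E → ℝ} (hg : ContinuousOn g Ω) :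
      ContinuousOn (fun x ↦ ENNReal.ofReal (g x) ^ p) Ω :=
    ENNReal.continuous_rpow_const.comp_continuousOn (ENNReal.continuous_ofReal.comp_continuousOn hg)
  have hv_ne : v ≠ 0 := norm_ne_zero_iff.1 (hv ▸ one_ne_zero)
  exact setLIntegral_le_mul_of_forall_line hv_ne
    (measurableSet_ball_subset_and_lt hΩ hρ hD.norm t) hΩ.measurableSet
    ((hcont (continuousOn_const.mul (hD.norm.pow _))).mono
      fun x hx ↦ setOf_ball_subset_subset Ω hρ hx.1)
    (hcont ((continuousOn_const.mul hDk.norm).sub continuousOn_const)) (natCast_ne_top N)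
    (lintegral_line_fderivWithin_apply_rpow_le hΩ hu hd hp hv.le hS ht hρ hSt hτ hN)

theorem ofReal_sub_rpow_mul_le {r s M κ : ℝ} {k : ℕ} (hκ : 0 < κ) (hM : 0 ≤ M) (ht : 0 ≤ t)
    (htr : t ≤ r) (hr : r ≤ M * s) (hp : 0 ≤ p) :
    ENNReal.ofReal (r - t) ^ ((k : ℝ) * p) ≤
      ENNReal.ofReal (M ^ k / κ) ^ p * ENNReal.ofReal (κ * s ^ k) ^ p := by
  rw [ENNReal.rpow_mul, ENNReal.rpow_natCast, ← ENNReal.ofReal_pow (sub_nonneg.2 htr),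
    ← ENNReal.mul_rpow_of_nonneg _ _ hp, ← ENNReal.ofReal_mul (by positivity)]
  gcongr
  calc (r - t) ^ k ≤ (M * s) ^ k :=
        pow_le_pow_left₀ (sub_nonneg.2 htr) (by linarith) k
    _ = M ^ k / κ * (κ * s ^ k) := by
        rw [mul_pow]
        field_simp

theorem ofReal_opNorm_sub_rpow_le_sum {ι : Type*} [Fintype ι] {k : ℕ} (hk : k ≠ 0) {e : ι → E}
    {M κ : ℝ} (hM : 0 < M) (hκ : 0 < κ) {L : E →L[ℝ] F} (he : L ≠ 0 → ∃ i, ‖L‖ ≤ M * ‖L (e i)‖)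
    (ht : 0 ≤ t) (hp : 0 < p) :
    ENNReal.ofReal (‖L‖ - t) ^ ((k : ℝ) * p) ≤ ENNReal.ofReal (M ^ k / κ) ^ p *
      ∑ i, if t / M < ‖L (e i)‖ then ENNReal.ofReal (κ * ‖L (e i)‖ ^ k) ^ p else 0 := by
  rcases le_or_gt ‖L‖ t with hLt | hLt
  · rw [ENNReal.ofReal_of_nonpos (sub_nonpos.2 hLt), ENNReal.zero_rpow_of_pos (by positivity)]
    exact zero_le
  obtain ⟨i, hi⟩ := he (norm_pos_iff.1 (ht.trans_lt hLt))
  have hti : t / M < ‖L (e i)‖ := (div_lt_iff₀' hM).2 (hLt.trans_le hi)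
  refine (ofReal_sub_rpow_mul_le hκ hM.le ht hLt.le hi hp.le).trans ?_
  gcongr
  refine (if_pos hti).symm.trans_le (Finset.single_le_sum_of_canonicallyOrdered
    (f := fun i ↦ if t / M < ‖L (e i)‖ then ENNReal.ofReal (κ * ‖L (e i)‖ ^ k) ^ p else 0)
    (Finset.mem_univ i))

theorem lintegral_opNorm_sub_rpow_le_sum {α ι : Type*} [MeasurableSpace α] {μ : Measure α}
    [Fintype ι] {k : ℕ} (hk : k ≠ 0) {e : ι → E} {M κ : ℝ} (hM : 0 < M) (hκ : 0 < κ)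
    {L : α → E →L[ℝ] F} (he : ∀ x, L x ≠ 0 → ∃ i, ‖L x‖ ≤ M * ‖L x (e i)‖)
    (hL : ∀ i, AEMeasurable (fun x ↦ ‖L x (e i)‖) μ) (ht : 0 ≤ t) (hp : 0 < p) :
    ∫⁻ x, ENNReal.ofReal (‖L x‖ - t) ^ ((k : ℝ) * p) ∂μ ≤ ENNReal.ofReal (M ^ k / κ) ^ p *
      ∑ i, ∫⁻ x in {x | t / M < ‖L x (e i)‖}, ENNReal.ofReal (κ * ‖L x (e i)‖ ^ k) ^ p ∂μ := by
  classical
  have hT (i : ι) : NullMeasurableSet {x | t / M < ‖L x (e i)‖} μ :=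
    nullMeasurableSet_lt aemeasurable_const (hL i)
  have hg (i : ι) : AEMeasurable (fun x ↦ ENNReal.ofReal (κ * ‖L x (e i)‖ ^ k) ^ p) μ :=
    (((hL i).pow_const k).const_mul κ).ennreal_ofReal.pow_const p
  simp_rw [← lintegral_indicator₀ (hT _)]
  rw [← lintegral_finsetSum' _ fun i _ ↦ (hg i).indicator₀ (hT i),
    ← lintegral_const_mul' _ _ (by finiteness)]
  refine lintegral_mono fun x ↦ ?_
  simpa only [Set.indicator_apply, Set.mem_ofPred_eq] using
    ofReal_opNorm_sub_rpow_le_sum hk hM hκ (he x) ht hp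

theorem lintegral_opNorm_fderivWithin_sub_rpow_le [SecondCountableTopology E] [MeasurableSpace E]
    [BorelSpace E] {μ : Measure E} [SFinite μ] [μ.IsAddRightInvariant] {ι : Type*} [Fintype ι]
    {e : ι → E} {M : ℝ} (hM : 0 < M) (he : ∀ i, ‖e i‖ = 1)
    (heM : ∀ L : E →L[ℝ] F, L ≠ 0 → ∃ i, ‖L‖ ≤ M * ‖L (e i)‖) (hΩ : IsOpen Ω)
    (hu : ContDiffOn ℝ (d + 1 : ℕ) u Ω) (hd : 1 ≤ d) (hp : 1 ≤ p)
    (hS : ∀ x ∈ Ω, ‖u x‖ ≤ S) (ht : 0 < t) (hρ : 0 < ρ)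
    (hSt : S ^ (d + 1) ≤ truncThreshold d / M ^ (d + 1) * t ^ (d + 1) * ρ ^ (d + 1)) {N : ℕ}
    {τ : ℝ} (hτ : 1 < τ) (hN : IsEmpty (Besicovitch.SatelliteConfig ℝ N τ)) :
    ∫⁻ x in {x | Metric.ball x ρ ⊆ Ω},
        ENNReal.ofReal (‖fderivWithin ℝ u Ω x‖ - t) ^ (((d + 1 : ℕ) : ℝ) * p) ∂μ ≤
      ENNReal.ofReal (M ^ (d + 1) / truncThreshold d) ^ p * (Fintype.card ι * N) *
        ∫⁻ x in Ω, ENNReal.ofReal (S ^ d * ‖iteratedFDerivWithin ℝ (d + 1) u Ω x‖ -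
          truncThreshold d / M ^ (d + 1) * t ^ (d + 1)) ^ p ∂μ := by
  have hscale : truncThreshold d / M ^ (d + 1) * t ^ (d + 1) =
      truncThreshold d * (t / M) ^ (d + 1) := by
    rw [div_pow]
    ring
  rw [hscale] at hSt ⊢
  have hball : MeasurableSet {x | Metric.ball x ρ ⊆ Ω} :=
    (isClosed_setOf_ball_subset Ω ρ).measurableSet
  have hmeas (i : ι) : AEMeasurable (fun x ↦ ‖fderivWithin ℝ u Ω x (e i)‖)
      (μ.restrict {x | Metric.ball x ρ ⊆ Ω}) :=
    ((((hu.continuousOn_fderivWithin hΩ.uniqueDiffOn (by simp)).clm_apply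
      continuousOn_const).norm).mono (setOf_ball_subset_subset Ω hρ)).aemeasurable hball
  refine (lintegral_opNorm_sub_rpow_le_sum d.succ_ne_zero hM (truncThreshold_pos d)
    (fun x ↦ heM (fderivWithin ℝ u Ω x)) hmeas ht.le (one_pos.trans_le hp)).trans ?_
  rw [mul_assoc, mul_assoc, ← nsmul_eq_mul, ← Finset.card_univ]
  gcongr
  refine Finset.sum_le_card_nsmul _ _ _ fun i _ ↦ ?_
  rw [Measure.restrict_restrict' hball, Set.inter_comm]
  exact lintegral_fderivWithin_apply_rpow_le hΩ hu hd hp (he i) hS (by positivity) hρ hSt hτ hN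

end Truncated

theorem truncated_gagliardo_nirenberg_general (E : Type*) [NormedAddCommGroup E]
    [NormedSpace ℝ E] [FiniteDimensional ℝ E] [MeasurableSpace E] [BorelSpace E] {k : ℕ}
    (hk : 1 ≤ k) {p : ℝ} (hp : 1 ≤ p) :
    ∃ C κ : ℝ, 0 < C ∧ 0 < κ ∧ ∀ (F : Type w) [NormedAddCommGroup F] [NormedSpace ℝ F]
      (μ : Measure E) [SFinite μ] [μ.IsAddRightInvariant] (Ω : Set E), IsOpen Ω →
      ∀ u : E → F, ContDiffOn ℝ k u Ω → ∀ S : ℝ, (∀ x ∈ Ω, ‖u x‖ ≤ S) →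
      ∀ t ρ : ℝ, 0 < t → 0 < ρ → S ^ k ≤ κ * t ^ k * ρ ^ k →
        ∫⁻ x in {x | Metric.ball x ρ ⊆ Ω},
            ENNReal.ofReal (‖fderivWithin ℝ u Ω x‖ - t) ^ ((k : ℝ) * p) ∂μ ≤
          ENNReal.ofReal C * ∫⁻ x in Ω,
            ENNReal.ofReal (S ^ (k - 1) * ‖iteratedFDerivWithin ℝ k u Ω x‖ - κ * t ^ k) ^ p ∂μ := by
  obtain ⟨d, rfl⟩ := Nat.exists_eq_add_of_le' hk
  rcases Nat.eq_zero_or_pos d with rfl | hd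
  · refine ⟨1, 1, one_pos, one_pos, fun F _ _ μ _ _ Ω hΩ u _ S _ t ρ _ hρ _ ↦ ?_⟩
    rw [ENNReal.ofReal_one, one_mul]
    refine (lintegral_mono_set (setOf_ball_subset_subset Ω hρ)).trans_eq
      (setLIntegral_congr_fun hΩ.measurableSet fun x hx ↦ ?_)
    simp [norm_iteratedFDerivWithin_one u (hΩ.uniqueDiffWithinAt hx)]
  · obtain ⟨n, e, M, hM, he, heM⟩ := exists_unitVectors_opNorm_le.{w} E
    obtain ⟨N, τ, hτ, hN⟩ := HasBesicovitchCovering.no_satelliteConfig (α := ℝ)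
    set c := ENNReal.ofReal (M ^ (d + 1) / truncThreshold d) ^ p * (Fintype.card (Fin n) * N)
    have hc : c ≤ ENNReal.ofReal (c.toReal + 1) :=
      (ENNReal.ofReal_toReal (by finiteness)).symm.trans_le (ENNReal.ofReal_le_ofReal (by linarith))
    refine ⟨c.toReal + 1, truncThreshold d / M ^ (d + 1), by positivity,
      div_pos (truncThreshold_pos d) (by positivity),
      fun F _ _ μ _ _ Ω hΩ u hu S hS t ρ ht hρ hSt ↦ ?_⟩
    refine (lintegral_opNorm_fderivWithin_sub_rpow_le hM he (heM F) hΩ hu hd hp hS ht hρ hSt hτ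
      hN).trans ?_
    rw [Nat.add_sub_cancel]
    gcongr

theorem bddAbove_norm_image {α F : Type*} [SeminormedAddCommGroup F] {u : α → F} {s : Set α}
    (h : Bornology.IsBounded (u '' s)) : BddAbove ((fun y ↦ ‖u y‖) '' s) := by
  obtain ⟨B, hB⟩ := h.exists_norm_le
  exact ⟨B, Set.forall_mem_image.2 fun y hy ↦ hB _ ⟨y, hy, rfl⟩⟩

theorem ofReal_max_zero_rpow (a : ℝ) {q : ℝ} (hq : 0 ≤ q) :
    ENNReal.ofReal (max a 0 ^ q) = ENNReal.ofReal a ^ q := by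
  rw [← ENNReal.ofReal_rpow_of_nonneg (le_max_right a 0) hq, ENNReal.ofReal_max,
    ENNReal.ofReal_zero, max_zero]

/-- Truncated Gagliardo–Nirenberg interpolation inequality (Proposition 3.3). -/
theorem truncated_gagliardo_nirenberg
    (m k : ℕ) (hm : 1 ≤ m) (hk : 1 ≤ k) (p : ℝ) (hp : 1 < p) :
    ∃ C κ : ℝ, 0 < C ∧ 0 < κ ∧ ∀ (ν : ℕ), 1 ≤ ν →
      ∀ (Ω : Set (EuclideanSpace ℝ (Fin m))), IsOpen Ω →
      ∀ (u : EuclideanSpace ℝ (Fin m) → EuclideanSpace ℝ (Fin ν)),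
        ContDiffOn ℝ k u Ω → Bornology.IsBounded (u '' Ω) →
      ∀ (t ρ : ℝ), 0 < t → 0 < ρ →
        (sSup ((fun y => ‖u y‖) '' Ω)) ^ k ≤ κ * t ^ k * ρ ^ k →
      ∀ (K : Set (EuclideanSpace ℝ (Fin m))), MeasurableSet K →
        (∀ x ∈ K, ∀ y : EuclideanSpace ℝ (Fin m), ‖y‖ < ρ → x + y ∈ Ω) →
        (∫⁻ x in K,
            ENNReal.ofReal
              ((max (‖fderivWithin ℝ u Ω x‖ - t) 0) ^ ((k : ℝ) * p)))
          ≤ ENNReal.ofReal C *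
            ∫⁻ x in Ω,
              ENNReal.ofReal
                ((max ((sSup ((fun y => ‖u y‖) '' Ω)) ^ (k - 1) *
                    ‖iteratedFDerivWithin ℝ k u Ω x‖ - κ * t ^ k) 0) ^ p) := by
  obtain ⟨C, κ, hC, hκ, h⟩ :=
    truncated_gagliardo_nirenberg_general (EuclideanSpace ℝ (Fin m)) hk hp.le
  refine ⟨C, κ, hC, hκ, fun ν _ Ω hΩ u hu hbdd t ρ ht hρ hSt K _ hK ↦ ?_⟩
  have hS : ∀ x ∈ Ω, ‖u x‖ ≤ sSup ((fun y => ‖u y‖) '' Ω) := fun x hx ↦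
    le_csSup (bddAbove_norm_image hbdd) ⟨x, hx, rfl⟩
  have hK_sub : K ⊆ {x | Metric.ball x ρ ⊆ Ω} := fun x hx z hz ↦ by
    simpa using hK x hx (z - x) (by rwa [← dist_eq_norm])
  have hp0 : 0 ≤ p := by linarith
  simp_rw [ofReal_max_zero_rpow _ hp0, ofReal_max_zero_rpow _ (mul_nonneg k.cast_nonneg hp0)]
  exact (lintegral_mono_set hK_sub).trans (h _ volume Ω hΩ u hu _ hS t ρ ht hρ hSt)
end
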